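/- arXiv:2309.06696 — 4 statements merged into one kernel-verified Lean document; each statement's English description precedes it below -/
import Mathlib

section
/- There exist absolute constants C, c > 0 such that for all positive integers n and f, every n-vertex unweighted graph G admits a subgraph H with at most C·f·n·(log n)^c edges such that for every f-degree fault set F and all vertices u, v, dist_{H\F}(u,v) ≤ C·(log n)^c · dist_{G\F}(u,v); that is, H is an f-FD (C·(log n)^c)-spanner of G. -/
open SimpleGraph
open scoped ENNReal

/-- `F` has faulty-degree at most `f`: every vertex is incident to at most `f` edges of `F`. -/
def DegLE {V : Type} (F : Set (Sym2 V)) (f : ℕ) : Prop :=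
  ∀ v : V, {e ∈ F | v ∈ e}.ncard ≤ f

/-- `H` is an `f`-faulty-degree `t`-spanner of `G` (unweighted distances, `∞` when
disconnected, real stretch factor `t`). -/
def IsFDSpanner {V : Type} (G H : SimpleGraph V) (f : ℕ) (t : ℝ) : Prop :=
  H ≤ G ∧ ∀ F : Set (Sym2 V), F ⊆ G.edgeSet → DegLE F f →
    ∀ u v : V,
      ((H.deleteEdges F).edist u v : ℝ≥0∞) ≤
        ENNReal.ofReal t * ((G.deleteEdges F).edist u v : ℝ≥0∞)

open Classical in
/-- ordered pairs `(x,y)` in `S × T` adjacent in `G` -/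
noncomputable def ie {V : Type} (G : SimpleGraph V) (S T : Finset V) : Finset (V × V) :=
  (S ×ˢ T).filter (fun p => G.Adj p.1 p.2)

lemma mem_ie {V : Type} (G : SimpleGraph V) (S T : Finset V) (p : V × V) :
    p ∈ ie G S T ↔ p.1 ∈ S ∧ p.2 ∈ T ∧ G.Adj p.1 p.2 := by
  classical
  simp [ie, and_assoc]

open Classical in
lemma ie_grow {V : Type} (G K : SimpleGraph V) (hK : K ≤ G) (S T S' : Finset V)
    (hd : Disjoint S T) (hS : S ⊆ S') (hT : ∀ x ∈ S, ∀ y ∈ T, K.Adj x y → y ∈ S') :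
    (ie G S S).card + 2 * (ie K S T).card ≤ (ie G S' S').card := by
  have hsw : ((ie K S T).image Prod.swap).card = (ie K S T).card :=
    Finset.card_image_of_injective _ Prod.swap_injective
  have hdis : ∀ x, x ∈ S → x ∈ T → False := fun x h1 h2 => Finset.disjoint_left.mp hd h1 h2
  have h1 : Disjoint (ie G S S) (ie K S T) := by
    rw [Finset.disjoint_left]
    intro p hp hq
    rw [mem_ie] at hp hq
    exact hdis _ hp.2.1 hq.2.1
  have h2 : Disjoint (ie G S S ∪ ie K S T) ((ie K S T).image Prod.swap) := by
    rw [Finset.disjoint_left]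
    rintro ⟨a, b⟩ hp hq
    simp only [Finset.mem_union, mem_ie, Finset.mem_image, Prod.exists, Prod.swap_prod_mk,
      Prod.mk.injEq] at hp hq
    obtain ⟨c, d, ⟨hc, hd', hcd⟩, rfl, rfl⟩ := hq
    rcases hp with hp | hp
    · exact hdis _ hp.1 hd'
    · exact hdis _ hp.1 hd'
  have h3 : (ie G S S ∪ ie K S T) ∪ ((ie K S T).image Prod.swap) ⊆ ie G S' S' := by
    rintro ⟨a, b⟩ hp
    simp only [Finset.mem_union, mem_ie, Finset.mem_image, Prod.exists, Prod.swap_prod_mk,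
      Prod.mk.injEq] at hp ⊢
    rcases hp with (hp | hp) | ⟨c, d, ⟨hc, hd', hcd⟩, rfl, rfl⟩
    · exact ⟨hS hp.1, hS hp.2.1, hp.2.2⟩
    · exact ⟨hS hp.1, hT _ hp.1 _ hp.2.1 hp.2.2, hK hp.2.2⟩
    · exact ⟨hT _ hc _ hd' hcd, hS hc, (hK hcd).symm⟩
  have := Finset.card_le_card h3
  rw [Finset.card_union_of_disjoint h2, Finset.card_union_of_disjoint h1, hsw] at this
  omega

open Classical in
lemma ie_split {V : Type} (G : SimpleGraph V) (S U : Finset V) (hS : S ⊆ U) :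
    (ie G U U).card ≤
      (ie G S S).card + 2 * (ie G S (U \ S)).card + (ie G (U \ S) (U \ S)).card := by
  have hsw : ((ie G S (U \ S)).image Prod.swap).card = (ie G S (U \ S)).card :=
    Finset.card_image_of_injective _ Prod.swap_injective
  have h3 : ie G U U ⊆ (ie G S S ∪ ie G S (U \ S)) ∪
      ((ie G S (U \ S)).image Prod.swap ∪ ie G (U \ S) (U \ S)) := by
    rintro ⟨a, b⟩ hp
    simp only [Finset.mem_union, mem_ie, Finset.mem_image, Prod.exists, Prod.swap_prod_mk,
      Prod.mk.injEq, Finset.mem_sdiff] at hp ⊢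
    obtain ⟨ha, hb, hab⟩ := hp
    by_cases h1 : a ∈ S <;> by_cases h2 : b ∈ S
    · exact Or.inl (Or.inl ⟨h1, h2, hab⟩)
    · exact Or.inl (Or.inr ⟨h1, ⟨hb, h2⟩, hab⟩)
    · exact Or.inr (Or.inl ⟨b, a, ⟨h2, ⟨ha, h1⟩, hab.symm⟩, rfl, rfl⟩)
    · exact Or.inr (Or.inr ⟨⟨ha, h1⟩, ⟨hb, h2⟩, hab⟩)
  have := Finset.card_le_card h3
  have a1 := Finset.card_union_le (ie G S S ∪ ie G S (U \ S))
    ((ie G S (U \ S)).image Prod.swap ∪ ie G (U \ S) (U \ S))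
  have a2 := Finset.card_union_le (ie G S S) (ie G S (U \ S))
  have a3 := Finset.card_union_le ((ie G S (U \ S)).image Prod.swap) (ie G (U \ S) (U \ S))
  omega

/-- number of faulty pairs leaving `S` -/
lemma ie_fault {V : Type} [Fintype V] (G : SimpleGraph V) (F : Set (Sym2 V)) (d : ℕ)
    (hF : DegLE F d) (S T : Finset V) :
    (ie G S T).card ≤ (ie (G.deleteEdges F) S T).card + d * S.card := by
  classical
  let B : Finset (V × V) := (S ×ˢ T).filter (fun p => s(p.1, p.2) ∈ F)
  have hB : B.card ≤ d * S.card := by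
    have hm : ∀ p ∈ B, p.1 ∈ S := by
      intro p hp
      simp only [B, Finset.mem_filter, Finset.mem_product] at hp
      exact hp.1.1
    refine Finset.card_le_mul_card_image_of_maps_to hm d ?_
    intro x hx
    have hfin : {e ∈ F | x ∈ e}.Finite := Set.toFinite _
    refine le_trans ?_ (hF x)
    rw [Set.ncard_eq_toFinset_card _ hfin]
    refine Finset.card_le_card_of_injOn (fun p => s(p.1, p.2)) ?_ ?_
    · rintro ⟨a, b⟩ hp
      simp only [B, Finset.coe_filter, Finset.mem_filter, Finset.mem_product,
        Set.mem_setOf_eq] at hp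
      obtain ⟨⟨_, h1⟩, rfl⟩ := hp
      simp [h1]
    · rintro ⟨a, b⟩ hp ⟨a', b'⟩ hq h
      simp only [B, Finset.coe_filter, Finset.mem_filter, Finset.mem_product,
        Set.mem_setOf_eq] at hp hq
      obtain ⟨_, rfl⟩ := hp
      obtain ⟨_, rfl⟩ := hq
      have h' := Sym2.congr_right.mp h
      simp only at h'
      rw [h']
  have hsub : ie G S T ⊆ ie (G.deleteEdges F) S T ∪ B := by
    rintro ⟨a, b⟩ hp
    simp only [mem_ie, Finset.mem_union, B, Finset.mem_filter, Finset.mem_product,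
      SimpleGraph.deleteEdges_adj] at hp ⊢
    tauto
  have := (Finset.card_le_card hsub).trans (Finset.card_union_le _ _)
  omega

open Classical in
lemma ball_grow {V : Type} [Fintype V] (G K : SimpleGraph V) (hK : K ≤ G) (U : Finset V)
    (lam J : ℕ) (hlam : 0 < lam) (hJ : U.card ^ 2 < 2 ^ J)
    (hexp : ∀ S ⊆ U, S.Nonempty → 2 * S.card ≤ U.card →
      (ie G S S).card < 4 * lam * (ie K S (U \ S)).card)
    (u : V) (hu : u ∈ U) :
    ∃ S ⊆ U, U.card < 2 * S.card ∧ ∀ x ∈ S, K.edist u x ≤ ((1 + 2 * lam * J : ℕ) : ℕ∞) := by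
  classical
  by_contra hcon
  push Not at hcon
  let step : Finset V → Finset V := fun S => S ∪ U.filter (fun y => ∃ x ∈ S, K.Adj x y)
  let B : ℕ → Finset V := fun r => step^[r] {u}
  have hB0 : B 0 = {u} := rfl
  have hBs : ∀ r, B (r + 1) = step (B r) := fun r => Function.iterate_succ_apply' _ _ _
  have hne : ∀ r, u ∈ B r := by
    intro r
    induction r with
    | zero => simp [hB0]
    | succ r ih => rw [hBs]; exact Finset.mem_union_left _ ih
  have hBU : ∀ r, B r ⊆ U := by
    intro r
    induction r with
    | zero => simpa [hB0] using hu
    | succ r ih => rw [hBs]; exact Finset.union_subset ih (Finset.filter_subset _ _)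
  have hBd : ∀ r, ∀ x ∈ B r, K.edist u x ≤ (r : ℕ∞) := by
    intro r
    induction r with
    | zero => intro x hx; rw [hB0, Finset.mem_singleton] at hx; subst hx; simp
    | succ r ih =>
      intro x hx
      rw [hBs] at hx
      rcases Finset.mem_union.mp hx with hx | hx
      · exact (ih x hx).trans (by exact_mod_cast Nat.le_succ r)
      · obtain ⟨_, y, hy, hyx⟩ := Finset.mem_filter.mp hx
        calc K.edist u x ≤ K.edist u y + K.edist y x := SimpleGraph.edist_triangle
          _ ≤ r + 1 := add_le_add (ih y hy) (SimpleGraph.edist_eq_one_iff_adj.mpr hyx).le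
          _ = _ := by push_cast; rfl
  set R := 1 + 2 * lam * J with hR
  have hsmall : ∀ r ≤ R, 2 * (B r).card ≤ U.card := by
    intro r hr
    by_contra h
    obtain ⟨x, hx, hx'⟩ := hcon (B r) (hBU r) (by omega)
    exact absurd ((hBd r x hx).trans (by exact_mod_cast hr)) (not_le.mpr hx')
  have hgrow : ∀ r, (ie G (B r) (B r)).card + 2 * (ie K (B r) (U \ B r)).card ≤
      (ie G (B (r+1)) (B (r+1))).card := by
    intro r
    refine ie_grow G K hK _ _ _ Finset.disjoint_sdiff ?_ ?_
    · rw [hBs]; exact Finset.subset_union_left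
    · intro x hx y hy hxy
      rw [hBs]
      exact Finset.mem_union_right _ (Finset.mem_filter.mpr ⟨(Finset.mem_sdiff.mp hy).1, x, hx, hxy⟩)
  have hex : ∀ r ≤ R, (ie G (B r) (B r)).card < 4 * lam * (ie K (B r) (U \ B r)).card :=
    fun r hr => hexp _ (hBU r) ⟨u, hne r⟩ (hsmall r hr)
  have h1 : 1 ≤ (ie G (B 1) (B 1)).card := by
    have := hgrow 0
    have h2 := hex 0 (Nat.zero_le _)
    have : 0 < (ie K (B 0) (U \ B 0)).card := by
      by_contra h
      simp at h
      simp [h] at h2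
    simp only [zero_add] at *
    omega
  have hl : (0 : ℝ) < lam := by exact_mod_cast hlam
  have hind : ∀ r, r + 1 ≤ R →
      (1 + 1 / (2 * lam : ℝ)) ^ r ≤ ((ie G (B (r + 1)) (B (r + 1))).card : ℝ) := by
    intro r
    induction r with
    | zero => intro _; simpa using h1
    | succ r ih =>
      intro hr
      have ih := ih (by omega)
      have e1 := hgrow (r + 1)
      have e2 := hex (r + 1) (by omega)
      have e1' : ((ie G (B (r+1)) (B (r+1))).card : ℝ) + 2 * (ie K (B (r+1)) (U \ B (r+1))).card ≤
        (ie G (B (r+1+1)) (B (r+1+1))).card := by exact_mod_cast e1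
      have e2' : ((ie G (B (r+1)) (B (r+1))).card : ℝ) ≤
          4 * lam * (ie K (B (r+1)) (U \ B (r+1))).card := by exact_mod_cast e2.le
      have e3 : ((ie G (B (r+1)) (B (r+1))).card : ℝ) * (1 / (2 * lam)) ≤
          2 * (ie K (B (r+1)) (U \ B (r+1))).card := by
        rw [mul_one_div, div_le_iff₀ (by positivity)]
        linarith
      rw [pow_succ]
      calc _ ≤ ((ie G (B (r+1)) (B (r+1))).card : ℝ) * (1 + 1 / (2 * lam : ℝ)) := by gcongr
        _ ≤ _ := by linarith
  have hfin := hind (2 * lam * J) (by omega)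
  have hbern : (2 : ℝ) ≤ (1 + 1 / (2 * lam : ℝ)) ^ (2 * lam) := by
    have := one_add_mul_le_pow (a := (1 / (2 * lam : ℝ)))
      (by have : (0:ℝ) ≤ 1 / (2 * lam : ℝ) := by positivity
          linarith) (2 * lam)
    refine le_trans (le_of_eq ?_) this
    push_cast
    field_simp
    norm_num
  rw [pow_mul] at hfin
  have h5 : (2 : ℝ) ^ J ≤ ((1 + 1 / (2 * lam : ℝ)) ^ (2 * lam)) ^ J := by gcongr
  have h6 : (ie G (B (2 * lam * J + 1)) (B (2 * lam * J + 1))).card ≤ U.card ^ 2 := by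
    refine (Finset.card_filter_le _ _).trans ?_
    rw [Finset.card_product, sq]
    exact Nat.mul_le_mul (Finset.card_le_card (hBU _)) (Finset.card_le_card (hBU _))
  have h7 : (2 : ℝ) ^ J ≤ (U.card : ℝ) ^ 2 := (h5.trans hfin).trans (by exact_mod_cast h6)
  have h8 : 2 ^ J ≤ U.card ^ 2 := by exact_mod_cast h7
  omega

/-- a nonempty subgraph in which each edge is redundant, robustly under faults -/
def Robust {V : Type} (f t : ℕ) (K : SimpleGraph V) : Prop :=
  K ≠ ⊥ ∧ ∀ u v, K.Adj u v → ∀ F : Set (Sym2 V), DegLE F f →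
    (K.deleteEdges (F ∪ {s(u, v)})).edist u v ≤ (t : ℕ∞)

lemma degLE_insert {V : Type} [Fintype V] (F : Set (Sym2 V)) (f : ℕ) (hF : DegLE F f)
    (e : Sym2 V) : DegLE (F ∪ {e}) (f + 1) := by
  intro v
  have : {x ∈ F ∪ {e} | v ∈ x} ⊆ {x ∈ F | v ∈ x} ∪ {e} := by
    rintro x ⟨hx | hx, hv⟩
    · exact Or.inl ⟨hx, hv⟩
    · exact Or.inr hx
  refine (Set.ncard_le_ncard this (Set.toFinite _)).trans ((Set.ncard_union_le _ _).trans ?_)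
  have := hF v
  simp only [Set.ncard_singleton]
  omega

lemma exists_robust {V : Type} [Fintype V] (f n : ℕ) (hn : Fintype.card V = n)
    (H : SimpleGraph V)
    (hH : 4 * (f + 1) * n * Nat.log 2 n < (ie H Finset.univ Finset.univ).card) :
    ∃ K ≤ H, Robust f (2 * (1 + 2 * Nat.log 2 n * (2 * Nat.log 2 n + 2))) K := by
  classical
  let P : Finset V → Prop := fun U => 4 * (f + 1) * U.card * Nat.log 2 U.card < (ie H U U).card
  have hPu : P Finset.univ := by simpa [P, Finset.card_univ, hn] using hH
  obtain ⟨U, hU, hmin⟩ : ∃ U, P U ∧ ∀ S, S ⊂ U → ¬ P S := by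
    obtain ⟨U, hU⟩ := (Set.toFinite {U | P U}).exists_minimal ⟨_, hPu⟩
    exact ⟨U, hU.prop, fun S hS hPS => hU.not_lt hPS hS⟩
  have hkn : U.card ≤ n := hn ▸ Finset.card_le_univ U
  let K : SimpleGraph V :=
    { Adj := fun x y => H.Adj x y ∧ x ∈ U ∧ y ∈ U
      symm := ⟨fun x y h => ⟨h.1.symm, h.2.2, h.2.1⟩⟩
      loopless := ⟨fun x h => H.loopless.irrefl x h.1⟩ }
  have hKH : K ≤ H := fun x y h => h.1
  have hieK : ∀ S T, S ⊆ U → T ⊆ U → ie K S T = ie H S T := by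
    intro S T hS hT
    ext ⟨a, b⟩
    simp only [mem_ie, K]
    constructor
    · rintro ⟨h1, h2, h3, _⟩; exact ⟨h1, h2, h3⟩
    · rintro ⟨h1, h2, h3⟩; exact ⟨h1, h2, h3, hS h1, hT h2⟩
  obtain ⟨⟨a, b⟩, hab⟩ : (ie H U U).Nonempty := by
    rw [← Finset.card_pos]; exact lt_of_le_of_lt (Nat.zero_le _) hU
  rw [mem_ie] at hab
  have hn2 : 2 ≤ U.card := by
    have : ({a, b} : Finset V) ⊆ U := by
      intro x hx
      simp only [Finset.mem_insert, Finset.mem_singleton] at hx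
      rcases hx with rfl | rfl
      exacts [hab.1, hab.2.1]
    have h := Finset.card_le_card this
    rwa [Finset.card_pair hab.2.2.ne] at h
  have hlam : 0 < Nat.log 2 n := Nat.log_pos (by norm_num) (by omega)
  have hJ : U.card ^ 2 < 2 ^ (2 * Nat.log 2 n + 2) := by
    have h1 : n < 2 ^ (Nat.log 2 n + 1) := Nat.lt_pow_succ_log_self (by norm_num) n
    have h2 : U.card ^ 2 < (2 ^ (Nat.log 2 n + 1)) ^ 2 := Nat.pow_lt_pow_left (by omega) (by norm_num)
    rw [← pow_mul] at h2
    convert h2 using 2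
    ring
  refine ⟨K, hKH, ?_, ?_⟩
  · intro h
    have : K.Adj a b := ⟨hab.2.2, hab.1, hab.2.1⟩
    rw [h] at this
    exact this
  intro u v huv F hF
  have hF' := degLE_insert F f hF s(u, v)
  set F' := F ∪ {s(u, v)}
  have hexp : ∀ S ⊆ U, S.Nonempty → 2 * S.card ≤ U.card →
      (ie H S S).card < 4 * Nat.log 2 n * (ie (K.deleteEdges F') S (U \ S)).card := by
    intro S hSU hS hS2
    have hs0 := hS.card_pos
    have hfault := ie_fault K F' (f + 1) hF' S (U \ S)
    rw [hieK S _ hSU Finset.sdiff_subset] at hfault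
    have hsplit := ie_split H S U hSU
    have hSss : S ⊂ U := by
      refine hSU.ssubset_of_ne ?_
      rintro rfl; omega
    have hTss : U \ S ⊂ U := by
      refine Finset.sdiff_ssubset hSU hS
    have p1 := hmin _ hSss
    have p2 := hmin _ hTss
    simp only [P, not_lt] at p1 p2 hU
    have hc : (U \ S).card + S.card = U.card := Finset.card_sdiff_add_card_eq_card hSU
    have l1 : Nat.log 2 S.card + 1 ≤ Nat.log 2 U.card := by
      rw [← Nat.log_mul_base (by norm_num) (by omega)]
      exact Nat.log_mono_right (by omega)
    have l2 : Nat.log 2 (U \ S).card ≤ Nat.log 2 U.card := Nat.log_mono_right (by omega)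
    have l3 : Nat.log 2 U.card ≤ Nat.log 2 n := Nat.log_mono_right hkn
    set lU := Nat.log 2 U.card
    set s := S.card
    set w := (U \ S).card
    set q := (ie H S (U \ S)).card
    have q1 : 4 * (f + 1) * s * Nat.log 2 s + 4 * (f + 1) * s ≤ 4 * (f + 1) * s * lU := by
      calc _ = 4 * (f + 1) * s * (Nat.log 2 s + 1) := by ring
        _ ≤ _ := by gcongr
    have q2 : 4 * (f + 1) * w * Nat.log 2 w ≤ 4 * (f + 1) * w * lU := by gcongr
    have q3 : 4 * (f + 1) * U.card * lU = 4 * (f + 1) * s * lU + 4 * (f + 1) * w * lU := by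
      rw [← hc]; ring
    have hq : 4 * (f + 1) * s < 2 * q := by omega
    have q4 : (ie H S S).card ≤ 4 * (f + 1) * s * Nat.log 2 n :=
      p1.trans (by gcongr; omega)
    have hb : (f + 1) * s < (ie (K.deleteEdges F') S (U \ S)).card := by
      have : 4 * (f + 1) * s = 4 * ((f + 1) * s) := by ring
      omega
    calc _ ≤ 4 * (f + 1) * s * Nat.log 2 n := q4
      _ = 4 * Nat.log 2 n * ((f + 1) * s) := by ring
      _ < _ := by gcongr
  have hle : K.deleteEdges F' ≤ H := (SimpleGraph.deleteEdges_le _).trans hKH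
  obtain ⟨A, hAU, hA, hAd⟩ := ball_grow H _ hle U _ _ hlam hJ hexp u huv.2.1
  obtain ⟨B, hBU, hB, hBd⟩ := ball_grow H _ hle U _ _ hlam hJ hexp v huv.2.2
  obtain ⟨x, hx⟩ : (A ∩ B).Nonempty := by
    rw [← Finset.card_pos]
    have h1 := Finset.card_union_add_card_inter A B
    have h2 := Finset.card_le_card (Finset.union_subset hAU hBU)
    omega
  rw [Finset.mem_inter] at hx
  calc _ ≤ (K.deleteEdges F').edist u x + (K.deleteEdges F').edist x v := SimpleGraph.edist_triangle
    _ ≤ _ := add_le_add (hAd x hx.1) (SimpleGraph.edist_comm (G := K.deleteEdges F') ▸ hBd x hx.2)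
    _ = _ := by push_cast; ring

lemma exists_max {V : Type} [Fintype V] (f t : ℕ) (G : SimpleGraph V) :
    ∃ H ≤ G, (∀ K ≤ H, ¬ Robust f t K) ∧
      ∀ u v, G.Adj u v → ¬ H.Adj u v → ∀ F : Set (Sym2 V), DegLE F f →
        (H.deleteEdges F).edist u v ≤ (t : ℕ∞) := by
  classical
  obtain ⟨H, hH⟩ := (Set.toFinite {H : SimpleGraph V | H ≤ G ∧ ∀ K ≤ H, ¬ Robust f t K}).exists_maximal
    ⟨⊥, bot_le, fun K hK h => h.1 (le_bot_iff.mp hK)⟩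
  refine ⟨H, hH.prop.1, hH.prop.2, ?_⟩
  intro u v huv hnuv F hF
  have hnot : ¬ (H ⊔ SimpleGraph.edge u v ≤ G ∧ ∀ K ≤ H ⊔ SimpleGraph.edge u v, ¬ Robust f t K) := by
    intro h
    have hle := hH.le_of_ge h le_sup_left
    exact hnuv (hle (Or.inr (by simp [SimpleGraph.edge_adj, huv.ne])))
  have hle : H ⊔ SimpleGraph.edge u v ≤ G := by
    refine sup_le hH.prop.1 ?_
    intro x y hxy
    rw [SimpleGraph.edge_adj] at hxy
    rcases hxy.1 with ⟨rfl, rfl⟩ | ⟨rfl, rfl⟩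
    exacts [huv, huv.symm]
  push Not at hnot
  obtain ⟨K, hK, hR⟩ := hnot hle
  have hcase : ∀ x y, K.Adj x y → H.Adj x y ∨ s(x, y) = s(u, v) := by
    intro x y hxy
    rcases hK hxy with h | h
    · exact Or.inl h
    · rw [SimpleGraph.edge_adj] at h
      right
      rcases h.1 with ⟨rfl, rfl⟩ | ⟨rfl, rfl⟩
      · rfl
      · exact Sym2.eq_swap
  have hKuv : K.Adj u v := by
    by_contra h
    refine hH.prop.2 K ?_ hR
    intro x y hxy
    rcases hcase x y hxy with h1 | h1
    · exact h1
    · exfalso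
      apply h
      rw [← SimpleGraph.mem_edgeSet, ← h1]
      exact hxy
  refine le_trans (SimpleGraph.edist_anti ?_) (hR.2 u v hKuv F hF)
  intro x y hxy
  rw [SimpleGraph.deleteEdges_adj] at hxy ⊢
  simp only [Set.mem_union, Set.mem_singleton_iff, not_or] at hxy
  exact ⟨(hcase x y hxy.1).resolve_right hxy.2.2, hxy.2.1⟩

lemma spanner_of_edges {V : Type} (G H : SimpleGraph V) (f t : ℕ) (ht : 1 ≤ t) (hHG : H ≤ G)
    (h : ∀ u v, G.Adj u v → ¬ H.Adj u v → ∀ F : Set (Sym2 V), DegLE F f →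
        (H.deleteEdges F).edist u v ≤ (t : ℕ∞)) (T : ℝ) (hT : (t : ℝ) ≤ T) :
    IsFDSpanner G H f T := by
  refine ⟨hHG, fun F _ hF u v => ?_⟩
  have hadj : ∀ x y, (G.deleteEdges F).Adj x y → (H.deleteEdges F).edist x y ≤ (t : ℕ∞) := by
    intro x y hxy
    rw [SimpleGraph.deleteEdges_adj] at hxy
    by_cases hh : H.Adj x y
    · have : (H.deleteEdges F).Adj x y := SimpleGraph.deleteEdges_adj.mpr ⟨hh, hxy.2⟩
      rw [SimpleGraph.edist_eq_one_iff_adj.mpr this]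
      exact_mod_cast ht
    · exact h x y hxy.1 hh F hF
  have hw : ∀ x y (p : (G.deleteEdges F).Walk x y),
      (H.deleteEdges F).edist x y ≤ ((t * p.length : ℕ) : ℕ∞) := by
    intro x y p
    induction p with
    | nil => simp
    | cons hxy p ih =>
      refine SimpleGraph.edist_triangle.trans ((add_le_add (hadj _ _ hxy) ih).trans (le_of_eq ?_))
      simp only [SimpleGraph.Walk.length_cons]
      push_cast
      ring
  have htT : (t : ℝ≥0∞) ≤ ENNReal.ofReal T := by
    rw [← ENNReal.ofReal_natCast]
    exact ENNReal.ofReal_le_ofReal hT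
  by_cases hr : (G.deleteEdges F).Reachable u v
  · obtain ⟨p, hp⟩ := hr.exists_walk_length_eq_edist
    have h1 := hw u v p
    rw [← hp]
    have h2 : ((H.deleteEdges F).edist u v : ℝ≥0∞) ≤ (((t * p.length : ℕ) : ℕ∞) : ℝ≥0∞) := by
      exact_mod_cast h1
    refine h2.trans ?_
    push_cast
    gcongr
  · have : (G.deleteEdges F).edist u v = ⊤ := SimpleGraph.edist_eq_top_of_not_reachable hr
    rw [this, ENat.toENNReal_top, ENNReal.mul_top]
    · exact le_top
    · intro h0
      rw [h0] at htT
      simp at htT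
      omega

lemma ie_univ {V : Type} [Fintype V] (H : SimpleGraph V) :
    (ie H Finset.univ Finset.univ).card = 2 * H.edgeSet.ncard := by
  classical
  have h1 : H.edgeSet.ncard = H.edgeFinset.card := by
    rw [← SimpleGraph.coe_edgeFinset, Set.ncard_coe_finset]
  rw [h1, ← SimpleGraph.sum_degrees_eq_twice_card_edges, ie, Finset.card_filter,
    Finset.sum_product]
  refine Finset.sum_congr rfl fun x _ => ?_
  rw [← Finset.card_filter, ← SimpleGraph.card_neighborFinset_eq_degree]
  congr 1
  ext y
  simp

/-- There are absolute constants `C, c > 0` such that every `n`-vertex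
unweighted graph has an `f`-FD `(C·(log n)^c)`-spanner with at most `C·f·n·(log n)^c` edges. -/
theorem fd_polylog_spanner_exists :
    ∃ C c : ℝ, 0 < C ∧ 0 < c ∧
      ∀ (n f : ℕ), 0 < n → 0 < f →
        ∀ (V : Type) [Fintype V], Fintype.card V = n →
          ∀ G : SimpleGraph V,
            ∃ H : SimpleGraph V,
              IsFDSpanner G H f (C * Real.log n ^ c) ∧
              (H.edgeSet.ncard : ℝ) ≤ C * f * n * Real.log n ^ c := by
  refine ⟨40, 2, by norm_num, by norm_num, ?_⟩
  intro n f hn hf V _ hV G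
  rw [Real.rpow_two]
  rcases Nat.lt_or_ge n 2 with h2 | h2
  · have hn1 : n = 1 := by omega
    subst hn1
    have : Subsingleton V := Fintype.card_le_one_iff_subsingleton.mp hV.le
    refine ⟨⊥, ⟨bot_le, ?_⟩, by simp⟩
    intro F _ _ u v
    rw [Subsingleton.elim u v]
    simp
  set l := Nat.log 2 n with hl
  have hl1 : 1 ≤ l := Nat.log_pos (by norm_num) h2
  have hl1' : (1 : ℝ) ≤ l := by exact_mod_cast hl1
  have hpow : 2 ^ l ≤ n := Nat.pow_log_le_self 2 (by omega)
  have hlog : (l : ℝ) * Real.log 2 ≤ Real.log n := by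
    rw [← Real.log_pow]
    exact Real.log_le_log (by positivity) (by exact_mod_cast hpow)
  have hlog2 : 18 * (l : ℝ) ^ 2 ≤ 40 * Real.log n ^ 2 := by
    have := Real.log_two_gt_d9
    have h3 : (l : ℝ) * 0.69 ≤ Real.log n := le_trans (by gcongr; linarith) hlog
    have h4 : ((l : ℝ) * 0.69) ^ 2 ≤ Real.log n ^ 2 := by gcongr
    nlinarith
  obtain ⟨H, hHG, hno, hsp⟩ := exists_max f (2 * (1 + 2 * l * (2 * l + 2))) G
  refine ⟨H, spanner_of_edges G H f _ (by omega) hHG hsp _ ?_, ?_⟩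
  · refine le_trans ?_ hlog2
    push_cast
    nlinarith
  · have hb : (ie H Finset.univ Finset.univ).card ≤ 4 * (f + 1) * n * l := by
      by_contra h
      obtain ⟨K, hK, hR⟩ := exists_robust f n hV H (not_le.mp h)
      exact hno K hK hR
    rw [ie_univ] at hb
    have hb' : 2 * (H.edgeSet.ncard : ℝ) ≤ 4 * (f + 1) * n * l := by exact_mod_cast hb
    have hf' : (1 : ℝ) ≤ f := by exact_mod_cast hf
    have h5 : 4 * ((f : ℝ) + 1) * n * l ≤ 4 * (f + f) * n * l := by gcongr
    have h6 : (4 : ℝ) * l ≤ 40 * Real.log n ^ 2 := le_trans (by nlinarith) hlog2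
    calc (H.edgeSet.ncard : ℝ) ≤ (f * n) * (4 * l) := by linarith
      _ ≤ (f * n) * (40 * Real.log n ^ 2) := by gcongr
      _ = _ := by ring
end

section
/- There exists an absolute constant A > 0 such that for all positive integers n, k, f, every n-vertex undirected graph G with positive edge weights admits an f-FD (2k−1)-spanner H ⊆ G with at most f^{1−1/k} · n^{1+1/k} · (A·k)^k edges. -/
open SimpleGraph
open scoped ENNReal

/-- Weighted shortest-path distance with respect to edge weights `w`
(`∞` when there is no path). -/
noncomputable def wdist {V : Type} (G : SimpleGraph V) (w : Sym2 V → ℝ) (u v : V) : ℝ≥0∞ :=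
  ⨅ p : G.Walk u v, (p.edges.map fun e => ENNReal.ofReal (w e)).sum

section analytic
variable {V : Type} [Fintype V] [DecidableEq V]

/-- product of a sequence of matrices -/
noncomputable def PM (M : ℕ → Matrix V V ℝ) : ℕ → Matrix V V ℝ
  | 0 => 1
  | n+1 => PM M n * M n

lemma chain_sum (M : ℕ → Matrix V V ℝ) (n : ℕ) : ∀ (K : V → V → ℝ),
    ∑ w : Fin (n+1) → V, (∏ i : Fin n, M i (w i.castSucc) (w i.succ)) * K (w 0) (w (Fin.last n))
      = ∑ x, ∑ y, PM M n x y * K x y := by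
  induction n with
  | zero =>
    intro K
    simp only [PM, Finset.univ_eq_empty, Finset.prod_empty, one_mul, Matrix.one_apply, ite_mul,
      zero_mul, Finset.sum_ite_eq, Finset.mem_univ, if_true]
    rw [← (Equiv.funUnique (Fin 1) V).sum_comp]
    simp
  | succ n ih =>
    intro K
    rw [← (Fin.snocEquiv (fun _ : Fin (n+2) => V)).sum_comp, Fintype.sum_prod_type_right]
    have := ih (fun x y => ∑ z, M n y z * K x z)
    simp only [PM, Matrix.mul_apply]
    calc _ = ∑ w : Fin (n+1) → V, (∏ i : Fin n, M i (w i.castSucc) (w i.succ)) * ∑ z, M n (w (Fin.last n)) z * K (w 0) z := by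
          apply Finset.sum_congr rfl
          intro w _
          rw [Finset.mul_sum]
          apply Finset.sum_congr rfl
          intro z _
          rw [Fin.prod_univ_castSucc]
          have h0 : (0 : Fin (n+1+1)) = Fin.castSucc 0 := rfl
          simp only [Fin.snocEquiv, Equiv.coe_fn_mk, Fin.snoc_castSucc, Fin.succ_last, Fin.snoc_last, h0, Fin.val_castSucc, Fin.val_last, Fin.succ_castSucc]
          ring
      _ = _ := by
          rw [this]
          apply Finset.sum_congr rfl
          intro x _
          simp only [Finset.mul_sum, Finset.sum_mul]
          rw [Finset.sum_comm]
          refine Finset.sum_congr rfl fun y _ => Finset.sum_congr rfl fun z _ => by ring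

lemma closed_sum (M : ℕ → Matrix V V ℝ) (n : ℕ) :
    ∑ w : Fin (n+1) → V, ∏ i : Fin (n+1), M i (w i) (w (i+1)) = (PM M (n+1)).trace := by
  have := chain_sum M n (fun x y => M n y x)
  simp only [Matrix.trace, Matrix.diag, PM, Matrix.mul_apply]
  rw [← this]
  refine Finset.sum_congr rfl fun w _ => ?_
  rw [Fin.prod_univ_castSucc]
  simp [Fin.coeSucc_eq_succ]

lemma PM_const (N : Matrix V V ℝ) (n : ℕ) : PM (fun _ => N) n = N ^ n := by
  induction n with
  | zero => simp [PM]
  | succ n ih => rw [PM, ih, pow_succ]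

lemma PM_two (E0 E1 N : Matrix V V ℝ) (b c : ℕ) :
    PM (fun i => if i = 0 then E0 else if i = b+1 then E1 else N) (b+2+c)
      = E0 * N^b * E1 * N^c := by
  set M : ℕ → Matrix V V ℝ := fun i => if i = 0 then E0 else if i = b+1 then E1 else N with hM
  have h1 : ∀ a, a ≤ b → PM M (a+1) = E0 * N^a := by
    intro a
    induction a with
    | zero => intro _; simp [PM, hM]
    | succ a ih =>
      intro h
      rw [PM, ih (by omega), pow_succ, ← mul_assoc]
      congr 1
      simp only [hM]
      rw [if_neg (by omega), if_neg (by omega)]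
  induction c with
  | zero =>
    rw [add_zero, PM, h1 b le_rfl]
    simp [hM]
  | succ c ih =>
    rw [← add_assoc, PM, ih, pow_succ, ← mul_assoc]
    congr 1
    simp only [hM]
    rw [if_neg (by omega), if_neg (by omega)]

/-- blocked sum with gap `b` and complementary gap `c` -/
noncomputable def RS (N : Matrix V V ℝ) (B : V → V → V → V → Prop) (b c : ℕ) : ℝ :=
  open Classical in
  ∑ u, ∑ v, ∑ y, ∑ y', if B u v y y' then
    N u v * (N^b) v y * N y y' * (N^c) y' u else 0

lemma blocked_sum (N : Matrix V V ℝ) (B : V → V → V → V → Prop) (b c : ℕ) (j : Fin (b+1+c+1))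
    (hj : (j:ℕ) = b+1) :
    open Classical in
    (∑ w : Fin (b+1+c+1) → V, if B (w 0) (w (0+1)) (w j) (w (j+1)) then
      ∏ i : Fin (b+1+c+1), N (w i) (w (i+1)) else 0) = RS N B b c := by
  classical
  have key : ∀ u v y y', (∑ w : Fin (b+1+c+1) → V,
      if (w 0 = u ∧ w (0+1) = v) ∧ (w j = y ∧ w (j+1) = y') then
      ∏ i : Fin (b+1+c+1), N (w i) (w (i+1)) else 0)
      = N u v * (N^b) v y * N y y' * (N^c) y' u := by
    intro u v y y'
    set E0 : Matrix V V ℝ := fun p q => if p = u ∧ q = v then N p q else 0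
    set E1 : Matrix V V ℝ := fun p q => if p = y ∧ q = y' then N p q else 0
    have e0 : ∀ p q, E0 p q = if p = u ∧ q = v then N p q else 0 := fun _ _ => rfl
    have e1 : ∀ p q, E1 p q = if p = y ∧ q = y' then N p q else 0 := fun _ _ => rfl
    clear_value E0 E1
    have h := closed_sum (fun i => if i = 0 then E0 else if i = b+1 then E1 else N) (b+1+c)
    have e : b+1+c+1 = b+2+c := by ring
    have hp := PM_two E0 E1 N b c
    rw [← e] at hp
    rw [hp] at h
    have htr : (E0 * N^b * E1 * N^c).trace = N u v * (N^b) v y * N y y' * (N^c) y' u := by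
      have a1 : ∀ p q, (E0 * N^b) p q = if p = u then N u v * (N^b) v q else 0 := by
        intro p q
        rw [Matrix.mul_apply, Finset.sum_eq_single v]
        · by_cases hp : p = u <;> simp [e0, hp]
        · intro r _ hr; simp [e0, hr]
        · simp
      have a2 : ∀ p q, (E0 * N^b * E1) p q = if p = u ∧ q = y' then N u v * (N^b) v y * N y y' else 0 := by
        intro p q
        rw [Matrix.mul_apply, Finset.sum_eq_single y]
        · rw [a1]
          by_cases hp : p = u <;> by_cases hq : q = y' <;> simp [e1, hp, hq]
        · intro r _ hr; simp [e1, hr]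
        · simp
      rw [Matrix.trace, Finset.sum_eq_single u]
      · rw [Matrix.diag, Matrix.mul_apply, Finset.sum_eq_single y']
        · rw [a2]; simp
        · intro r _ hr; rw [a2]; simp [hr]
        · simp
      · intro r _ hr
        rw [Matrix.diag, Matrix.mul_apply]
        exact Finset.sum_eq_zero fun q _ => by rw [a2]; simp [hr]
      · simp
    clear hp
    rw [← htr, ← h]
    refine Finset.sum_congr rfl fun w _ => ?_
    have hj0 : j ≠ 0 := by intro h; rw [h] at hj; simp at hj
    split_ifs with hw
    · refine Finset.prod_congr rfl fun i _ => ?_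
      by_cases hi : i = 0
      · subst hi; rw [if_pos (show ((0 : Fin (b+1+c+1)):ℕ) = 0 from rfl), e0, if_pos hw.1]
      · have hi' : (i:ℕ) ≠ 0 := fun h0 => hi (Fin.ext h0)
        rw [if_neg hi']
        by_cases hij : i = j
        · subst hij; rw [if_pos hj, e1, if_pos hw.2]
        · rw [if_neg]
          intro h; exact hij (Fin.ext (by omega))
    · symm
      rcases not_and_or.mp hw with hw | hw
      · refine Finset.prod_eq_zero (Finset.mem_univ 0) ?_
        rw [if_pos (show ((0 : Fin (b+1+c+1)):ℕ) = 0 from rfl), e0, if_neg hw]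
      · refine Finset.prod_eq_zero (Finset.mem_univ j) ?_
        rw [if_neg (by omega), if_pos hj, e1, if_neg hw]
  unfold RS
  simp_rw [← key]
  have sw : ∀ (P : Prop) [Decidable P] (f : (Fin (b+1+c+1) → V) → ℝ), (if P then ∑ w, f w else 0) = ∑ w, if P then f w else 0 := by
    intro P _ f; split_ifs <;> simp
  simp_rw [sw]
  have : ∀ w : Fin (b+1+c+1) → V, (if B (w 0) (w (0+1)) (w j) (w (j+1)) then
      ∏ i : Fin (b+1+c+1), N (w i) (w (i+1)) else 0) = ∑ u, ∑ v, ∑ y, ∑ y',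
      if B u v y y' then (if (w 0 = u ∧ w (0+1) = v) ∧ (w j = y ∧ w (j+1) = y') then
      ∏ i : Fin (b+1+c+1), N (w i) (w (i+1)) else 0) else 0 := by
    intro w
    rw [Finset.sum_eq_single (w 0), Finset.sum_eq_single (w (0+1)), Finset.sum_eq_single (w j),
      Finset.sum_eq_single (w (j+1))]
    · simp only [and_self, if_true]
    · intro r _ hr; simp [hr.symm]
    · simp
    · intro r _ hr; simp [hr.symm]
    · simp
    · intro r _ hr
      refine Finset.sum_eq_zero fun _ _ => Finset.sum_eq_zero fun _ _ => ?_
      split_ifs with _ h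
      · exact absurd h.1.2.symm hr
      · rfl
      · rfl
    · simp
    · intro r _ hr
      refine Finset.sum_eq_zero fun _ _ => Finset.sum_eq_zero fun _ _ => Finset.sum_eq_zero fun _ _ => ?_
      simp [hr.symm]
    · simp
  rw [Finset.sum_congr rfl fun w _ => this w, Finset.sum_comm]
  refine Finset.sum_congr rfl fun u _ => ?_
  rw [Finset.sum_comm]
  refine Finset.sum_congr rfl fun v _ => ?_
  rw [Finset.sum_comm]
  refine Finset.sum_congr rfl fun y _ => ?_
  rw [Finset.sum_comm]

lemma blocked_sum' (N : Matrix V V ℝ) (B : V → V → V → V → Prop) (n b c : ℕ) (h : n = b+1+c)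
    (i j : Fin (n+1)) (hj : (j:ℕ) = b+1) :
    open Classical in
    (∑ w : Fin (n+1) → V, if B (w i) (w (i+1)) (w (i+j)) (w (i+j+1)) then
      ∏ l : Fin (n+1), N (w l) (w (l+1)) else 0) = RS N B b c := by
  classical
  subst h
  rw [← blocked_sum N B b c j hj]
  rw [← (Equiv.arrowCongr (Equiv.addLeft i) (Equiv.refl V)).sum_comp]
  refine Finset.sum_congr rfl fun w _ => ?_
  have hw : ∀ l, (Equiv.arrowCongr (Equiv.addLeft i) (Equiv.refl V)) w l = w (-i + l) := by
    intro l; simp [Equiv.arrowCongr]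
  simp only [hw]
  have e1 : -i + i = 0 := by simp
  have e2 : -i + (i+1) = 0+1 := by simp
  have e3 : -i + (i+j) = j := by simp
  have e4 : -i + (i+j+1) = j+1 := by rw [add_assoc i j 1]; simp
  rw [e1, e2, e3, e4]
  congr 1
  rw [← Equiv.prod_comp (Equiv.addLeft i)]
  refine Finset.prod_congr rfl fun l _ => ?_
  simp [add_assoc]

lemma union_bd (N : Matrix V V ℝ) (hN : ∀ x y, 0 ≤ N x y) (B : V → V → V → V → Prop) (n : ℕ)
    (hcl : ∀ w : Fin (n+1) → V, (∀ i, N (w i) (w (i+1)) ≠ 0) →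
      ∃ i j, i ≠ j ∧ B (w i) (w (i+1)) (w j) (w (j+1))) :
    (N^(n+1)).trace ≤ (n+1) * ∑ b ∈ Finset.range n, RS N B b (n-1-b) := by
  classical
  have h1 : (N^(n+1)).trace = ∑ w : Fin (n+1) → V, ∏ l : Fin (n+1), N (w l) (w (l+1)) := by
    rw [← PM_const, ← closed_sum]
  rw [h1]
  have h2 : ∀ w : Fin (n+1) → V, ∏ l : Fin (n+1), N (w l) (w (l+1)) ≤
      ∑ i : Fin (n+1), ∑ b : Fin n, if B (w i) (w (i+1)) (w (i+b.succ)) (w (i+b.succ+1)) then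
      ∏ l : Fin (n+1), N (w l) (w (l+1)) else 0 := by
    intro w
    have h0 : 0 ≤ ∏ l : Fin (n+1), N (w l) (w (l+1)) := Finset.prod_nonneg fun _ _ => hN _ _
    by_cases hw : ∀ i, N (w i) (w (i+1)) ≠ 0
    · obtain ⟨i, j, hij, hb⟩ := hcl w hw
      obtain ⟨b, hb'⟩ := Fin.exists_succ_eq.mpr (sub_ne_zero.mpr hij.symm)
      have hj : i + b.succ = j := by rw [hb']; simp
      calc _ = if B (w i) (w (i+1)) (w (i+b.succ)) (w (i+b.succ+1)) then
            ∏ l : Fin (n+1), N (w l) (w (l+1)) else 0 := by rw [hj, if_pos hb]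
        _ ≤ ∑ b : Fin n, if B (w i) (w (i+1)) (w (i+b.succ)) (w (i+b.succ+1)) then
            ∏ l : Fin (n+1), N (w l) (w (l+1)) else 0 :=
            Finset.single_le_sum (f := fun b : Fin n => if B (w i) (w (i+1)) (w (i+b.succ)) (w (i+b.succ+1)) then
            ∏ l : Fin (n+1), N (w l) (w (l+1)) else 0) (fun _ _ => by split_ifs <;> simp [h0]) (Finset.mem_univ b)
        _ ≤ _ := Finset.single_le_sum (f := fun i : Fin (n+1) => ∑ b : Fin n, if B (w i) (w (i+1)) (w (i+b.succ)) (w (i+b.succ+1)) then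
            ∏ l : Fin (n+1), N (w l) (w (l+1)) else 0) (fun _ _ => Finset.sum_nonneg fun _ _ => by split_ifs <;> simp [h0]) (Finset.mem_univ i)
    · push Not at hw
      obtain ⟨i, hi⟩ := hw
      rw [Finset.prod_eq_zero (Finset.mem_univ i) hi]
      simp
  refine (Finset.sum_le_sum fun w _ => h2 w).trans ?_
  rw [Finset.sum_comm]
  have h3 : ∀ i : Fin (n+1), (∑ w : Fin (n+1) → V, ∑ b : Fin n, if B (w i) (w (i+1)) (w (i+b.succ)) (w (i+b.succ+1)) then
      ∏ l : Fin (n+1), N (w l) (w (l+1)) else 0) = ∑ b ∈ Finset.range n, RS N B b (n-1-b) := by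
    intro i
    rw [Finset.sum_comm, ← Fin.sum_univ_eq_sum_range (fun b => RS N B b (n-1-b))]
    refine Finset.sum_congr rfl fun b _ => ?_
    exact blocked_sum' N B n b (n-1-b) (by omega) i b.succ (by simp)
  rw [Finset.sum_congr rfl fun i _ => h3 i]
  simp

/-- squared Frobenius norm of the `m`-th power -/
noncomputable def TT (N : Matrix V V ℝ) (m : ℕ) : ℝ := ∑ x, ∑ y, ((N^m) x y)^2

lemma RS_bd (N : Matrix V V ℝ) (hN : ∀ x y, 0 ≤ N x y)
    (B : V → V → V → V → Prop) (F D : ℝ) (hF : 0 ≤ F)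
    (hB : ∀ u v y, (open Classical in ∑ y', if N y y' ≠ 0 ∧ B u v y y' then (1:ℝ) else 0) ≤ F)
    (hD : ∀ y', ∑ y, (N y y')^2 ≤ D) (a b : ℕ) :
    RS N B b (a + b + a) ^ 2 ≤ (F * TT N (a+b+1)) * (D * TT N (a+b)) := by
  classical
  have hpow : ∀ m x y, 0 ≤ (N^m) x y := by
    intro m
    induction m with
    | zero => intro x y; simp only [pow_zero, Matrix.one_apply]; split_ifs <;> simp
    | succ m ih => intro x y; rw [pow_succ, Matrix.mul_apply]; exact Finset.sum_nonneg fun z _ => mul_nonneg (ih _ _) (hN _ _)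
  set cc : V → V → V → ℝ := fun z y y' => ∑ u, ∑ v, if N y y' ≠ 0 ∧ B u v y y' then
    (N^a) z u * N u v * (N^b) v y else 0 with hcc
  have hsplit : ∀ z y, (N^(a+b+1)) z y = ∑ u, ∑ v, (N^a) z u * N u v * (N^b) v y := by
    intro z y
    rw [show a+b+1 = a+1+b by ring, pow_add, pow_succ, Matrix.mul_apply, Finset.sum_comm]
    refine Finset.sum_congr rfl fun v _ => ?_
    rw [Matrix.mul_apply, Finset.sum_mul]
  have hterm : ∀ z u v y, 0 ≤ (N^a) z u * N u v * (N^b) v y := fun z u v y =>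
    mul_nonneg (mul_nonneg (hpow _ _ _) (hN _ _)) (hpow _ _ _)
  have hc0 : ∀ z y y', 0 ≤ cc z y y' := by
    intro z y y'
    refine Finset.sum_nonneg fun u _ => Finset.sum_nonneg fun v _ => ?_
    split_ifs
    · exact hterm _ _ _ _
    · exact le_rfl
  have hc1 : ∀ z y y', cc z y y' ≤ (N^(a+b+1)) z y := by
    intro z y y'
    rw [hsplit]
    refine Finset.sum_le_sum fun u _ => Finset.sum_le_sum fun v _ => ?_
    split_ifs
    · exact le_rfl
    · exact hterm _ _ _ _
  have hc2 : ∀ z y, ∑ y', cc z y y' ≤ F * (N^(a+b+1)) z y := by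
    intro z y
    rw [hsplit]
    simp only [hcc]
    rw [Finset.sum_comm, Finset.mul_sum]
    refine Finset.sum_le_sum fun u _ => ?_
    rw [Finset.sum_comm, Finset.mul_sum]
    refine Finset.sum_le_sum fun v _ => ?_
    calc _ = (∑ y', if N y y' ≠ 0 ∧ B u v y y' then (1:ℝ) else 0) * ((N^a) z u * N u v * (N^b) v y) := by
          rw [Finset.sum_mul]; refine Finset.sum_congr rfl fun y' _ => ?_
          split_ifs <;> simp
      _ ≤ _ := mul_le_mul_of_nonneg_right (hB u v y) (hterm _ _ _ _)
  have hRS : RS N B b (a+b+a) = ∑ q : V × V × V, cc q.1 q.2.1 q.2.2 * (N q.2.1 q.2.2 * (N^(a+b)) q.2.2 q.1) := by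
    simp only [Fintype.sum_prod_type]
    unfold RS
    have : ∀ y' u, (N^(a+b+a)) y' u = ∑ z, (N^(a+b)) y' z * (N^a) z u := by
      intro y' u; rw [pow_add _ (a+b) a, Matrix.mul_apply]
    have e1 : ∀ u v y y', (if B u v y y' then N u v * (N^b) v y * N y y' * (N^(a+b+a)) y' u else 0)
        = ∑ z, (if N y y' ≠ 0 ∧ B u v y y' then (N^a) z u * N u v * (N^b) v y else 0) * (N y y' * (N^(a+b)) y' z) := by
      intro u v y y'
      by_cases hb : B u v y y'
      · by_cases hn : N y y' = 0
        · simp [hn]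
        · simp only [hb, hn, ne_eq, not_false_eq_true, and_self, if_true]
          rw [this, Finset.mul_sum]
          refine Finset.sum_congr rfl fun z _ => by ring
      · simp [hb]
    simp only [e1, hcc, Finset.sum_mul]
    calc _ = ∑ u, ∑ v, ∑ z, ∑ y, ∑ y', (if N y y' ≠ 0 ∧ B u v y y' then (N^a) z u * N u v * (N^b) v y else 0) * (N y y' * (N^(a+b)) y' z) := by
          refine Finset.sum_congr rfl fun u _ => Finset.sum_congr rfl fun v _ => ?_
          rw [Finset.sum_comm]
          rw [Finset.sum_congr rfl fun y' _ => Finset.sum_comm]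
          rw [Finset.sum_comm]
          refine Finset.sum_congr rfl fun z _ => ?_
          rw [Finset.sum_comm]
      _ = ∑ z, ∑ u, ∑ v, ∑ y, ∑ y', (if N y y' ≠ 0 ∧ B u v y y' then (N^a) z u * N u v * (N^b) v y else 0) * (N y y' * (N^(a+b)) y' z) := by
          rw [Finset.sum_congr rfl fun y' _ => Finset.sum_comm]
          rw [Finset.sum_comm]
      _ = _ := by
          refine Finset.sum_congr rfl fun z _ => ?_
          rw [Finset.sum_congr rfl fun u _ => Finset.sum_comm]
          rw [Finset.sum_comm]
          refine Finset.sum_congr rfl fun y _ => ?_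
          rw [Finset.sum_congr rfl fun u _ => Finset.sum_comm]
          rw [Finset.sum_comm]
  rw [hRS]
  refine (Finset.sum_mul_sq_le_sq_mul_sq _ _ _).trans ?_
  have hA : ∑ q : V × V × V, (cc q.1 q.2.1 q.2.2)^2 ≤ F * TT N (a+b+1) := by
    simp only [Fintype.sum_prod_type]
    unfold TT
    rw [Finset.mul_sum]
    refine Finset.sum_le_sum fun z _ => ?_
    rw [Finset.mul_sum]
    refine Finset.sum_le_sum fun y _ => ?_
    calc ∑ y', (cc z y y')^2 ≤ ∑ y', cc z y y' * (N^(a+b+1)) z y := by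
          refine Finset.sum_le_sum fun y' _ => ?_
          rw [sq]; exact mul_le_mul_of_nonneg_left (hc1 _ _ _) (hc0 _ _ _)
      _ = (∑ y', cc z y y') * (N^(a+b+1)) z y := by rw [Finset.sum_mul]
      _ ≤ (F * (N^(a+b+1)) z y) * (N^(a+b+1)) z y := mul_le_mul_of_nonneg_right (hc2 _ _) (hpow _ _ _)
      _ = _ := by ring
  have hBd : ∑ q : V × V × V, (N q.2.1 q.2.2 * (N^(a+b)) q.2.2 q.1)^2 ≤ D * TT N (a+b) := by
    simp only [Fintype.sum_prod_type]
    unfold TT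
    calc _ = ∑ y', ∑ z, (∑ y, (N y y')^2) * ((N^(a+b)) y' z)^2 := by
          rw [Finset.sum_congr rfl fun u _ => Finset.sum_comm]
          rw [Finset.sum_comm]
          refine Finset.sum_congr rfl fun y' _ => Finset.sum_congr rfl fun z _ => ?_
          rw [Finset.sum_mul]
          refine Finset.sum_congr rfl fun y _ => by ring
      _ ≤ _ := by
          rw [Finset.mul_sum]
          refine Finset.sum_le_sum fun z _ => ?_
          rw [Finset.mul_sum]
          refine Finset.sum_le_sum fun y _ => ?_
          exact mul_le_mul_of_nonneg_right (hD _) (sq_nonneg _)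
  exact mul_le_mul hA hBd (Finset.sum_nonneg fun _ _ => sq_nonneg _) (mul_nonneg hF (Finset.sum_nonneg fun _ _ => Finset.sum_nonneg fun _ _ => sq_nonneg _))

lemma pow_symm' (N : Matrix V V ℝ) (hs : N.transpose = N) (m : ℕ) (x y : V) : (N^m) x y = (N^m) y x := by
  have : (N^m).transpose = N^m := by rw [Matrix.transpose_pow, hs]
  conv_lhs => rw [← this, Matrix.transpose_apply]

lemma RS_swap (N : Matrix V V ℝ) (hs : N.transpose = N)
    (B : V → V → V → V → Prop) (hsw : ∀ u v y y', B u v y y' ↔ B v u y' y) (b c : ℕ) :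
    RS N B b c = RS N B c b := by
  classical
  have s1 : ∀ x y, N x y = N y x := fun x y => by simpa using pow_symm' N hs 1 x y
  unfold RS
  rw [Finset.sum_comm]
  refine Finset.sum_congr rfl fun v _ => Finset.sum_congr rfl fun u _ => ?_
  rw [Finset.sum_comm]
  refine Finset.sum_congr rfl fun y _ => Finset.sum_congr rfl fun y' _ => ?_
  have : B u v y' y ↔ B v u y y' := hsw _ _ _ _
  simp only [this]
  split_ifs
  · rw [s1 u v, s1 y' y, pow_symm' N hs b, pow_symm' N hs c]; ring
  · rfl

lemma TT_trace (N : Matrix V V ℝ) (hs : N.transpose = N) (m : ℕ) : TT N m = (N^(2*m)).trace := by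
  rw [two_mul, pow_add]
  simp only [TT, Matrix.trace, Matrix.diag, Matrix.mul_apply]
  refine Finset.sum_congr rfl fun x _ => Finset.sum_congr rfl fun y _ => ?_
  rw [pow_symm' N hs m y x, sq]

lemma TT_nonneg (N : Matrix V V ℝ) (m : ℕ) : 0 ≤ TT N m :=
  Finset.sum_nonneg fun _ _ => Finset.sum_nonneg fun _ _ => sq_nonneg _

lemma TT_step (N : Matrix V V ℝ) (hN : ∀ x y, 0 ≤ N x y) (hs : N.transpose = N)
    (B : V → V → V → V → Prop) (hsw : ∀ u v y y', B u v y y' ↔ B v u y' y) (F D : ℝ) (hF : 0 ≤ F)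
    (hD0 : 0 ≤ D)
    (hB : ∀ u v y, (open Classical in ∑ y', if N y y' ≠ 0 ∧ B u v y y' then (1:ℝ) else 0) ≤ F)
    (hD : ∀ y', ∑ y, (N y y')^2 ≤ D) (p : ℕ)
    (hcl : ∀ w : Fin (2*p+1+1) → V, (∀ i, N (w i) (w (i+1)) ≠ 0) →
      ∃ i j, i ≠ j ∧ B (w i) (w (i+1)) (w j) (w (j+1))) :
    TT N (p+1) ≤ 16 * (p+1)^4 * F * D * TT N p := by
  set S := √((F * TT N (p+1)) * (D * TT N p)) with hS
  have hR1 : ∀ b c, b ≤ p → b + c = 2*p → RS N B b c ≤ S := by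
    intro b c hb hc
    obtain ⟨a, rfl⟩ := Nat.exists_eq_add_of_le' hb
    obtain rfl : c = a + b + a := by omega
    exact Real.le_sqrt_of_sq_le (RS_bd N hN B F D hF hB hD a b)
  have hR : ∀ b c, b + c = 2*p → RS N B b c ≤ S := by
    intro b c hc
    rcases le_total b p with h | h
    · exact hR1 b c h hc
    · rw [RS_swap N hs B hsw]; exact hR1 c b (by omega) (by omega)
  have hu := union_bd N hN B (2*p+1) hcl
  have hT : TT N (p+1) ≤ (2*(p+1)) * ((2*p+1) * S) := by
    rw [TT_trace N hs]
    refine hu.trans ?_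
    push_cast
    have : ∑ b ∈ Finset.range (2*p+1), RS N B b (2*p+1-1-b) ≤ (2*p+1) * S := by
      refine (Finset.sum_le_card_nsmul _ _ S ?_).trans ?_
      · intro b hb
        have := Finset.mem_range.mp hb
        exact hR _ _ (by omega)
      · simp
    have h2 : (2*(p:ℝ)+1+1) = 2*(p+1) := by ring
    rw [h2]
    exact mul_le_mul_of_nonneg_left this (by positivity)
  have hS0 : 0 ≤ S := Real.sqrt_nonneg _
  have hT2 : TT N (p+1) ≤ 4*(p+1)^2 * S := by
    refine hT.trans ?_
    have : (0:ℝ) ≤ p := Nat.cast_nonneg p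
    nlinarith [mul_nonneg this hS0]
  have h0 := TT_nonneg N (p+1)
  have h1 := TT_nonneg N p
  rcases h0.eq_or_lt with h | h
  · rw [← h]; positivity
  · have hsq : S^2 = (F * TT N (p+1)) * (D * TT N p) := Real.sq_sqrt (by positivity)
    have : TT N (p+1) ^ 2 ≤ (16*(p+1)^4 * F * D * TT N p) * TT N (p+1) := by
      calc TT N (p+1) ^ 2 ≤ (4*(p+1)^2 * S)^2 := pow_le_pow_left₀ h0 hT2 2
        _ = 16*(p+1)^4 * S^2 := by ring
        _ = _ := by rw [hsq]; ring
    rw [sq] at this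
    exact le_of_mul_le_mul_right this h

set_option maxHeartbeats 1000000 in
lemma mindeg_bd (a : V → V → Prop) (hsym : ∀ x y, a x y → a y x) (k f δ : ℕ) (hk : 1 ≤ k) (hδ : 0 < δ)
    (hdeg : open Classical in ∀ x y, a x y → δ ≤ (Finset.univ.filter (fun z => a x z)).card)
    (hne : ∃ u v, a u v)
    (B : V → V → V → V → Prop) (hsw : ∀ u v y y', B u v y y' ↔ B v u y' y)
    (hB : open Classical in ∀ u v y, (Finset.univ.filter (fun z => B u v y z)).card ≤ f)
    (hcl : ∀ p, p + 1 ≤ k → ∀ w : Fin (2*p+1+1) → V, (∀ i, a (w i) (w (i+1))) →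
      ∃ i j, i ≠ j ∧ B (w i) (w (i+1)) (w j) (w (j+1))) :
    (δ:ℝ)^k ≤ (Fintype.card V : ℝ) * (16 * (k:ℝ)^4 * f)^(k-1) := by
  classical
  set d : V → ℝ := fun x => ((Finset.univ.filter (fun z => a x z)).card : ℝ) with hd
  have hd0 : ∀ x, 0 ≤ d x := fun x => Nat.cast_nonneg _
  have hδ' : (0:ℝ) < δ := by exact_mod_cast hδ
  have hdδ : ∀ x y, a x y → (δ:ℝ) ≤ d x := fun x y h => by
    have := hdeg x y h
    simp only [hd]; exact_mod_cast this
  set N : Matrix V V ℝ := Matrix.of (fun x y => if a x y then (√(d x))⁻¹ * (√(d y))⁻¹ else 0) with hNdef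
  have hNa : ∀ x y, N x y = if a x y then (√(d x))⁻¹ * (√(d y))⁻¹ else 0 := fun _ _ => rfl
  clear_value N
  have hN : ∀ x y, 0 ≤ N x y := by
    intro x y; rw [hNa]; split_ifs <;> positivity
  have hs : N.transpose = N := by
    ext x y
    rw [Matrix.transpose_apply, hNa, hNa]
    have : a y x ↔ a x y := ⟨hsym _ _, hsym _ _⟩
    simp only [this, mul_comm]
  have hne0 : ∀ x y, N x y ≠ 0 → a x y := by
    intro x y h; by_contra h'; rw [hNa, if_neg h'] at h; exact h rfl
  have hD : ∀ y', ∑ y, (N y y')^2 ≤ (δ:ℝ)⁻¹ := by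
    intro y'
    have h1 : ∀ y, (N y y')^2 ≤ if a y' y then (δ:ℝ)⁻¹ * (d y')⁻¹ else 0 := by
      intro y
      rw [hNa]
      by_cases h : a y y'
      · rw [if_pos h, if_pos (hsym _ _ h), mul_pow, inv_pow, inv_pow, Real.sq_sqrt (hd0 _), Real.sq_sqrt (hd0 _)]
        refine mul_le_mul_of_nonneg_right ?_ (inv_nonneg.mpr (hd0 _))
        exact inv_anti₀ hδ' (hdδ _ _ h)
      · rw [if_neg h, if_neg (fun h' => h (hsym _ _ h'))]; simp
    refine (Finset.sum_le_sum fun y _ => h1 y).trans ?_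
    rw [← Finset.sum_filter, Finset.sum_const, nsmul_eq_mul]
    change d y' * _ ≤ _
    rcases (hd0 y').eq_or_lt with h | h
    · rw [← h]; simp
    · rw [mul_comm, mul_assoc, inv_mul_cancel₀ h.ne', mul_one]
  have hF : ∀ u v y, (∑ y', if N y y' ≠ 0 ∧ B u v y y' then (1:ℝ) else 0) ≤ f := by
    intro u v y
    rw [← Finset.sum_filter, Finset.sum_const, nsmul_eq_mul, mul_one]
    have := hB u v y
    refine le_trans ?_ (Nat.cast_le.mpr this)
    refine Nat.cast_le.mpr (Finset.card_le_card ?_)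
    intro z; simp only [Finset.mem_filter, Finset.mem_univ, true_and]; exact fun h => h.2
  have hstep : ∀ p, p + 1 ≤ k → TT N (p+1) ≤ (16 * (k:ℝ)^4 * f) * (δ:ℝ)⁻¹ * TT N p := by
    intro p hp
    have h := TT_step N hN hs B hsw f (δ:ℝ)⁻¹ (Nat.cast_nonneg _) (by positivity) (fun u v y => by convert hF u v y) hD p
      (fun w hw => hcl p hp w (fun i => hne0 _ _ (hw i)))
    refine h.trans ?_
    have hpk : ((p:ℝ)+1) ≤ k := by exact_mod_cast hp
    have := TT_nonneg N p
    gcongr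
  have hT1 : TT N 1 ≤ (Fintype.card V : ℝ) * (δ:ℝ)⁻¹ := by
    unfold TT
    rw [Finset.sum_comm]
    simp only [pow_one]
    refine (Finset.sum_le_card_nsmul _ _ _ fun y _ => hD y).trans ?_
    simp
  have hTk : ∀ q, q + 1 ≤ k → TT N (q+1) ≤ ((16 * (k:ℝ)^4 * f) * (δ:ℝ)⁻¹)^q * ((Fintype.card V : ℝ) * (δ:ℝ)⁻¹) := by
    intro q
    induction q with
    | zero => intro _; simpa using hT1
    | succ q ih =>
      intro hq
      refine (hstep (q+1) hq).trans ?_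
      rw [pow_succ' (16 * (k:ℝ)^4 * f * (δ:ℝ)⁻¹) q, mul_assoc _ (_ ^ q)]
      exact mul_le_mul_of_nonneg_left (ih (by omega)) (by positivity)
  -- lower bound
  have hg : ∀ m x, ∑ y, (N^m) x y * √(d y) = √(d x) := by
    intro m
    induction m with
    | zero => intro x; simp [Matrix.one_apply]
    | succ m ih =>
      intro x
      have h1 : ∑ y, N x y * √(d y) = √(d x) := by
        have : ∀ y, N x y * √(d y) = if a x y then (√(d x))⁻¹ else 0 := by
          intro y
          rw [hNa]
          by_cases h : a x y
          · rw [if_pos h, if_pos h, mul_assoc, inv_mul_cancel₀, mul_one]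
            exact (Real.sqrt_pos.mpr (hδ'.trans_le (hdδ _ _ (hsym _ _ h)))).ne'
          · rw [if_neg h, if_neg h, zero_mul]
        rw [Finset.sum_congr rfl fun y _ => this y, ← Finset.sum_filter, Finset.sum_const, nsmul_eq_mul]
        change d x * _ = _
        rw [← div_eq_mul_inv, Real.div_sqrt]
      rw [pow_succ']
      simp only [Matrix.mul_apply, Finset.sum_mul]
      rw [Finset.sum_comm]
      calc _ = ∑ z, N x z * ∑ y, (N^m) z y * √(d y) := by
            refine Finset.sum_congr rfl fun z _ => ?_
            rw [Finset.mul_sum]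
            refine Finset.sum_congr rfl fun y _ => by ring
        _ = _ := by simp only [ih, h1]
  have hlow : 1 ≤ TT N k := by
    have hcs := Finset.sum_mul_sq_le_sq_mul_sq (Finset.univ : Finset (V × V)) (fun q => (N^k) q.1 q.2) (fun q => √(d q.1) * √(d q.2))
    simp only [Fintype.sum_prod_type] at hcs
    set m2 := ∑ x, d x with hm2
    have e1 : ∑ x, ∑ y, (N^k) x y * (√(d x) * √(d y)) = m2 := by
      refine Finset.sum_congr rfl fun x _ => ?_
      calc _ = √(d x) * ∑ y, (N^k) x y * √(d y) := by
            rw [Finset.mul_sum]; refine Finset.sum_congr rfl fun y _ => by ring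
        _ = d x := by rw [hg, Real.mul_self_sqrt (hd0 x)]
    have e2 : ∑ x, ∑ y, (√(d x) * √(d y))^2 = m2^2 := by
      rw [sq m2, hm2, Finset.sum_mul_sum]
      refine Finset.sum_congr rfl fun x _ => Finset.sum_congr rfl fun y _ => ?_
      rw [mul_pow, Real.sq_sqrt (hd0 _), Real.sq_sqrt (hd0 _)]
    have hm : 0 < m2 := by
      obtain ⟨u, v, h⟩ := hne
      exact (hδ'.trans_le (hdδ _ _ h)).trans_le (Finset.single_le_sum (fun x _ => hd0 x) (Finset.mem_univ u))
    rw [e1, e2] at hcs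
    change m2^2 ≤ TT N k * m2^2 at hcs
    have hm2p : 0 < m2^2 := pow_pos hm 2
    exact le_of_mul_le_mul_right (by rw [one_mul]; exact hcs) hm2p
  obtain ⟨q, rfl⟩ := Nat.exists_eq_add_of_le' hk
  have h := hlow.trans (hTk q le_rfl)
  simp only [Nat.add_sub_cancel]
  have hmul := mul_le_mul_of_nonneg_left h (show (0:ℝ) ≤ (δ:ℝ)^(q+1) by positivity)
  rw [mul_one] at hmul
  refine hmul.trans (le_of_eq ?_)
  rw [mul_pow, inv_pow, pow_succ]
  field_simp

lemma degen (a : V → V → Prop) (hsym : ∀ x y, a x y → a y x) (hirr : ∀ x, ¬ a x x) (Δ : ℝ)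
    (h : open Classical in ∀ U : Finset V, U.Nonempty → ∃ x ∈ U, ((U.filter (fun z => a x z)).card : ℝ) ≤ Δ) :
    open Classical in ∀ U : Finset V, (∑ x ∈ U, ((U.filter (fun z => a x z)).card : ℝ)) ≤ 2 * Δ * U.card := by
  classical
  intro U
  induction U using Finset.strongInduction with
  | H U ih =>
    rcases U.eq_empty_or_nonempty with rfl | hU
    · simp
    · obtain ⟨x, hx, hxd⟩ := h U (by convert hU)
      have hxd : ((U.filter (fun z => a x z)).card : ℝ) ≤ Δ := by convert hxd
      have ih' := ih (U.erase x) (Finset.erase_ssubset hx)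
      have hc : ∀ (W : Finset V) (y : V), ((W.filter (fun z => a y z)).card : ℝ) = ∑ z ∈ W, if a y z then (1:ℝ) else 0 := by
        intro W y; simp
      have e1 : ∑ y ∈ U, ((U.filter (fun z => a y z)).card : ℝ)
          = ∑ y ∈ U.erase x, (((U.erase x).filter (fun z => a y z)).card : ℝ) + 2 * ((U.filter (fun z => a x z)).card : ℝ) := by
        simp only [hc]
        rw [← Finset.sum_erase_add _ _ hx]
        have : ∀ y, (∑ z ∈ U, if a y z then (1:ℝ) else 0) = (∑ z ∈ U.erase x, if a y z then (1:ℝ) else 0) + if a y x then 1 else 0 := by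
          intro y; rw [← Finset.sum_erase_add _ _ hx]
        rw [Finset.sum_congr rfl fun y _ => this y, Finset.sum_add_distrib, two_mul, add_assoc]
        congr 2
        rw [this x, if_neg (hirr x), add_zero]
        refine Finset.sum_congr rfl fun y _ => ?_
        have : a y x ↔ a x y := ⟨hsym _ _, hsym _ _⟩
        simp only [this]
      have e2 : (U.card : ℝ) = (U.erase x).card + 1 := by
        rw [← Finset.card_erase_add_one hx]; push_cast; ring
      rw [e1, e2]
      nlinarith
end analytic

/-- hop walk of length `l` from `u` to `v` with edges in `X` -/
def HW {V : Type} (X : Set (Sym2 V)) (l : ℕ) (u v : V) : Prop :=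
  ∃ p : ℕ → V, p 0 = u ∧ p l = v ∧ ∀ t < l, s(p t, p (t+1)) ∈ X

lemma HW_mono {V : Type} {X Y : Set (Sym2 V)} (h : X ⊆ Y) {l : ℕ} {u v : V} (hw : HW X l u v) : HW Y l u v := by
  obtain ⟨p, h0, h1, h2⟩ := hw
  exact ⟨p, h0, h1, fun t ht => h (h2 t ht)⟩

lemma greedy {V : Type} [DecidableEq V] (w : Sym2 V → ℝ) (k f : ℕ) (hk : 0 < k) (S : Finset (Sym2 V)) :
    ∃ (H : Finset (Sym2 V)) (Fm : Sym2 V → Set (Sym2 V)), H ⊆ S ∧ (∀ e, DegLE (Fm e) f) ∧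
      (∀ a ∈ S, ∀ F : Set (Sym2 V), DegLE F f → a ∉ F → ∃ u v, a = s(u,v) ∧ ∃ l ≤ 2*k-1,
        HW {e | e ∈ H ∧ e ∉ F ∧ w e ≤ w a} l u v) ∧
      (∀ C : Set (Sym2 V), C ⊆ H → C.Nonempty → ∃ e ∈ C, ∀ u v, e = s(u,v) → ∀ l ≤ 2*k-1,
        ¬ HW {e' | e' ∈ C ∧ e' ≠ e ∧ e' ∉ Fm e} l u v) := by
  classical
  induction S using Finset.induction_on_max_value w with
  | empty =>
    refine ⟨∅, fun _ => ∅, le_rfl, fun _ v => by simp, by simp, ?_⟩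
    intro C hC hne
    obtain ⟨e, he⟩ := hne
    exact absurd (hC he) (by simp)
  | insert a S haS hmax ih =>
    obtain ⟨H, Fm, hHS, hFm, hsp, hbl⟩ := ih
    by_cases hadd : ∃ F : Set (Sym2 V), DegLE F f ∧ ∀ u v, a = s(u,v) → ∀ l ≤ 2*k-1,
        ¬ HW {e | e ∈ H ∧ e ∉ F} l u v
    · obtain ⟨F0, hF0, hno⟩ := hadd
      have haH : a ∉ H := fun h => haS (hHS h)
      refine ⟨insert a H, Function.update Fm a F0, Finset.insert_subset_insert _ hHS, ?_, ?_, ?_⟩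
      · intro e
        by_cases h : e = a
        · subst h; simpa using hF0
        · simpa [Function.update_of_ne h] using hFm e
      · intro b hb F hF hbF
        rcases Finset.mem_insert.mp hb with rfl | hb
        · induction b using Sym2.ind with
          | _ u v =>
            refine ⟨u, v, rfl, 1, by omega, fun t => if t = 0 then u else v, by simp, by simp, ?_⟩
            intro t ht
            obtain rfl : t = 0 := by omega
            simpa using hbF
        · obtain ⟨u, v, h1, l, hl, h2⟩ := hsp b hb F hF hbF
          exact ⟨u, v, h1, l, hl, HW_mono (by rintro e ⟨h3, h4⟩; exact ⟨Finset.mem_insert_of_mem h3, h4⟩) h2⟩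
      · intro C hC hne
        by_cases haC : a ∈ C
        · refine ⟨a, haC, fun u v huv l hl hw => hno u v huv l hl (HW_mono ?_ hw)⟩
          rintro e ⟨h1, h2, h3⟩
          refine ⟨?_, by simpa using h3⟩
          have := hC h1
          simpa [h2] using this
        · have hCH : C ⊆ H := by
            intro e he
            have h1 := hC he
            have h2 : e ≠ a := fun h => haC (h ▸ he)
            simpa [h2] using h1
          obtain ⟨e, he, h⟩ := hbl C hCH hne
          refine ⟨e, he, ?_⟩
          have h2 : e ≠ a := fun h => haC (h ▸ he)
          simpa [Function.update_of_ne h2] using h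
    · push Not at hadd
      refine ⟨H, Fm, hHS.trans (Finset.subset_insert _ _), hFm, ?_, hbl⟩
      intro b hb F hF hbF
      rcases Finset.mem_insert.mp hb with rfl | hb
      · obtain ⟨u, v, h1, l, hl, h2⟩ := hadd F hF
        exact ⟨u, v, h1, l, hl, HW_mono (by rintro e ⟨h3, h4⟩; exact ⟨h3, h4, hmax _ (hHS h3)⟩) h2⟩
      · exact hsp b hb F hF hbF

lemma wdist_self {V : Type} (G : SimpleGraph V) (w : Sym2 V → ℝ) (u : V) : wdist G w u u = 0 := by
  refine le_antisymm ?_ bot_le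
  exact (iInf_le _ Walk.nil).trans (by simp)

lemma wdist_comm {V : Type} (G : SimpleGraph V) (w : Sym2 V → ℝ) (u v : V) : wdist G w u v ≤ wdist G w v u := by
  refine le_iInf fun p => (iInf_le _ p.reverse).trans ?_
  rw [Walk.edges_reverse, List.map_reverse, List.sum_reverse]

lemma wdist_cons {V : Type} (G : SimpleGraph V) (w : Sym2 V → ℝ) (u v z : V) :
    wdist G w u z ≤ wdist G w u v + wdist G w v z := by
  unfold wdist
  exact ENNReal.le_iInf_add_iInf fun p q => (iInf_le _ (p.append q)).trans (by simp [Walk.edges_append])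

lemma wdist_HW {V : Type} (G : SimpleGraph V) (w : Sym2 V → ℝ) (r : ℝ) (X : Set (Sym2 V))
    (hX : ∀ e ∈ X, e ∈ G.edgeSet ∧ w e ≤ r) (l : ℕ) : ∀ u v, HW X l u v →
    wdist G w u v ≤ l * ENNReal.ofReal r := by
  induction l with
  | zero =>
    rintro u v ⟨p, h0, h1, -⟩
    obtain rfl : u = v := h0.symm.trans h1
    simp [wdist_self]
  | succ l ih =>
    rintro u v ⟨p, h0, h1, h2⟩
    have h3 := ih u (p l) ⟨p, h0, rfl, fun t ht => h2 t (by omega)⟩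
    have h4 := hX _ (h2 l (by omega))
    rw [h1] at h4
    have h5 : wdist G w (p l) v ≤ ENNReal.ofReal r := by
      refine (iInf_le _ (Walk.cons (G.mem_edgeSet.mp h4.1) Walk.nil)).trans ?_
      simpa using ENNReal.ofReal_le_ofReal h4.2
    calc _ ≤ _ := wdist_cons G w u (p l) v
      _ ≤ _ := add_le_add h3 h5
      _ = _ := by push_cast; ring

lemma spanner_of_edges_s7 {V : Type} (G H : SimpleGraph V) (w : Sym2 V → ℝ) (c : ℝ≥0∞) (hc : c ≠ ∞) (hc0 : c ≠ 0)
    (h : ∀ u v, G.Adj u v → wdist H w u v ≤ c * ENNReal.ofReal (w s(u,v))) (u v : V) :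
    wdist H w u v ≤ c * wdist G w u v := by
  conv_rhs => rw [wdist]
  rw [ENNReal.mul_iInf_of_ne hc0 hc]
  refine le_iInf fun p => ?_
  induction p with
  | nil => simp [wdist_self]
  | @cons x y z hadj p ih =>
    refine (wdist_cons H w x y z).trans ?_
    rw [Walk.edges_cons, List.map_cons, List.sum_cons, mul_add]
    exact add_le_add (h _ _ hadj) ih

noncomputable def DEL (n k f : ℕ) : ℝ := (n:ℝ) ^ (1 / (k:ℝ)) * (32 * (k:ℝ)^4 * f) ^ (1 - 1 / (k:ℝ))

lemma DEL_nonneg (n k f : ℕ) : 0 ≤ DEL n k f := by unfold DEL; positivity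

lemma DEL_pow (n k f : ℕ) (hk : 0 < k) : (DEL n k f)^k = (n:ℝ) * (32 * (k:ℝ)^4 * f)^(k-1) := by
  have hk0 : (k:ℝ) ≠ 0 := by positivity
  unfold DEL
  rw [mul_pow]
  congr 1
  · rw [one_div]; exact Real.rpow_inv_natCast_pow (by positivity) hk.ne'
  · rw [← Real.rpow_natCast, ← Real.rpow_mul (by positivity)]
    have : (1 - 1 / (k:ℝ)) * (k:ℝ) = ((k - 1 : ℕ) : ℝ) := by
      rw [Nat.cast_sub hk]
      field_simp
      simp
    rw [this, Real.rpow_natCast]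

lemma DEL_arith (n k f : ℕ) (hn : 0 < n) (hk : 0 < k) (hf : 0 < f) :
    (n:ℝ) * DEL n k f ≤ (f : ℝ) ^ (1 - 1 / (k : ℝ)) * (n : ℝ) ^ (1 + 1 / (k : ℝ)) * (512 * k) ^ k := by
  have hn' : (0:ℝ) < n := by exact_mod_cast hn
  have hk' : (1:ℝ) ≤ k := by exact_mod_cast hk
  have h1 : (32 * (k:ℝ)^4) ^ (1 - 1 / (k:ℝ)) ≤ (512 * k) ^ k := by
    have ha : (1:ℝ) ≤ 32 * (k:ℝ)^4 := by
      have := one_le_pow₀ hk' (n := 4)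
      linarith
    have hb : (32 * (k:ℝ)^4) ^ (1 - 1 / (k:ℝ)) ≤ 32 * (k:ℝ)^4 := by
      calc _ ≤ (32 * (k:ℝ)^4) ^ (1:ℝ) := by
            apply Real.rpow_le_rpow_of_exponent_le ha
            have : 0 ≤ 1 / (k:ℝ) := by positivity
            linarith
        _ = _ := Real.rpow_one _
    have hc : (k:ℝ) ≤ 2^k := by exact_mod_cast (Nat.lt_two_pow_self (n := k)).le
    have hd : (32:ℝ) ≤ 32^k := by
      calc (32:ℝ) = 32^1 := by norm_num
        _ ≤ 32^k := pow_le_pow_right₀ (by norm_num) hk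
    calc _ ≤ _ := hb
      _ ≤ 32^k * (2^k)^4 := by gcongr
      _ = 512^k := by rw [← pow_mul, mul_comm k 4, pow_mul, ← mul_pow]; norm_num
      _ ≤ _ := by
        apply pow_le_pow_left₀ (by norm_num)
        linarith
  unfold DEL
  rw [Real.mul_rpow (by positivity) (by positivity), Real.rpow_add hn', Real.rpow_one]
  calc _ = (f : ℝ) ^ (1 - 1 / (k : ℝ)) * (n * (n : ℝ) ^ (1 / (k : ℝ))) * (32 * (k:ℝ)^4) ^ (1 - 1 / (k:ℝ)) := by ring
    _ ≤ _ := by gcongr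

lemma closed_blocked {V : Type} (H : Set (Sym2 V)) (Fm : Sym2 V → Set (Sym2 V)) (k : ℕ)
    (hbl : ∀ C : Set (Sym2 V), C ⊆ H → C.Nonempty → ∃ e ∈ C, ∀ u v, e = s(u,v) → ∀ l ≤ 2*k-1,
        ¬ HW {e' | e' ∈ C ∧ e' ≠ e ∧ e' ∉ Fm e} l u v)
    (p : ℕ) (hp : p + 1 ≤ k) (w : Fin (2*p+1+1) → V) (hw : ∀ i, s(w i, w (i+1)) ∈ H) :
    ∃ i j, i ≠ j ∧ s(w j, w (j+1)) ∈ insert s(w i, w (i+1)) (Fm s(w i, w (i+1))) := by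
  obtain ⟨e, ⟨i, rfl⟩, he⟩ := hbl (Set.range fun i => s(w i, w (i+1)))
    (by rintro _ ⟨i, rfl⟩; exact hw i) ⟨_, 0, rfl⟩
  by_contra hno
  push Not at hno
  have h1 : ∀ t, Fin.ofNat (2*p+1+1) (t+1) = Fin.ofNat (2*p+1+1) t + 1 := by
    intro t; ext; simp [Fin.val_add]
  refine he (w (i+1)) (w i) Sym2.eq_swap (2*p+1) (by omega)
    ⟨fun t => w (i + 1 + Fin.ofNat (2*p+1+1) t), ?_, ?_, ?_⟩
  · have : Fin.ofNat (2*p+1+1) 0 = 0 := by ext; simp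
    simp only [this, add_zero]
  · have : Fin.ofNat (2*p+1+1) (2*p+1) + 1 = 0 := by rw [← h1]; ext; simp
    have h2 : i + 1 + Fin.ofNat (2*p+1+1) (2*p+1) = i := by
      rw [add_assoc i 1, add_comm (1 : Fin (2*p+1+1)), this, add_zero]
    simp only [h2]
  · intro t ht
    have hne : i ≠ i + 1 + Fin.ofNat (2*p+1+1) t := by
      intro h
      rw [add_assoc i 1, add_comm (1 : Fin (2*p+1+1)), ← h1] at h
      have h3 : Fin.ofNat (2*p+1+1) (t+1) = 0 := left_eq_add.mp h
      have h4 := congrArg Fin.val h3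
      simp only [Fin.val_ofNat, Fin.val_zero] at h4
      rw [Nat.mod_eq_of_lt (by omega)] at h4
      omega
    have h5 := hno i _ hne
    rw [Set.mem_insert_iff, not_or] at h5
    have h6 : i + 1 + Fin.ofNat (2*p+1+1) (t+1) = i + 1 + Fin.ofNat (2*p+1+1) t + 1 := by
      rw [h1, add_assoc (i+1)]
    simp only [h6]
    exact ⟨⟨_, rfl⟩, h5.1, h5.2⟩

lemma deg_insert {V : Type} [Fintype V] (F : Set (Sym2 V)) (f : ℕ) (hF : DegLE F f) (e : Sym2 V) (y : V) :
    open Classical in (Finset.univ.filter (fun z => s(y,z) ∈ insert e F)).card ≤ f + 1 := by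
  classical
  have h1 : {e' ∈ insert e F | y ∈ e'}.ncard ≤ f + 1 := by
    calc _ ≤ (insert e {e' ∈ F | y ∈ e'}).ncard := by
          apply Set.ncard_le_ncard _ (Set.toFinite _)
          rintro x ⟨rfl | hx, hy⟩
          · exact Or.inl rfl
          · exact Or.inr ⟨hx, hy⟩
      _ ≤ _ := (Set.ncard_insert_le _ _).trans (Nat.add_le_add_right (hF y) 1)
  refine le_trans ?_ h1
  rw [← Set.ncard_coe_finset]
  refine Set.ncard_le_ncard_of_injOn (fun z => s(y,z)) ?_ ?_ (Set.toFinite _)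
  · intro z hz
    simp only [Finset.coe_filter, Finset.mem_univ, true_and, Set.mem_ofPred_eq] at hz
    exact ⟨hz, by simp⟩
  · intro z _ z' _ h
    exact Sym2.congr_right.mp h

lemma low_degree {V : Type} [Fintype V] [DecidableEq V] (Hg : SimpleGraph V) (Fm : Sym2 V → Set (Sym2 V)) (k f : ℕ)
    (hk : 0 < k) (hf : 0 < f) (hFm : ∀ e, DegLE (Fm e) f)
    (hbl : ∀ C : Set (Sym2 V), C ⊆ Hg.edgeSet → C.Nonempty → ∃ e ∈ C, ∀ u v, e = s(u,v) → ∀ l ≤ 2*k-1,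
        ¬ HW {e' | e' ∈ C ∧ e' ≠ e ∧ e' ∉ Fm e} l u v) (U : Finset V) (hU : U.Nonempty) :
    open Classical in ∃ x ∈ U, ((U.filter (fun z => Hg.Adj x z)).card : ℝ) ≤ DEL (Fintype.card V) k f := by
  classical
  by_contra hcon
  push Not at hcon
  set D := DEL (Fintype.card V) k f with hD
  have hD0 : 0 ≤ D := DEL_nonneg _ _ _
  have key := mindeg_bd (fun x y => Hg.Adj x y ∧ x ∈ U ∧ y ∈ U) (fun x y h => ⟨h.1.symm, h.2.2, h.2.1⟩)
    k (f+1) (⌊D⌋₊+1) hk (Nat.succ_pos _) ?_ ?_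
    (fun u v y y' => s(y,y') ∈ insert s(u,v) (Fm s(u,v))) ?_ ?_ ?_
  · have h1 : D < ((⌊D⌋₊+1 : ℕ) : ℝ) := by push_cast; exact Nat.lt_floor_add_one D
    have h2 : D^k < ((⌊D⌋₊+1 : ℕ) : ℝ)^k := pow_lt_pow_left₀ h1 hD0 hk.ne'
    rw [hD, DEL_pow _ _ _ hk, ← hD] at h2
    have h3 := h2.trans_le key
    refine absurd h3 (not_lt.mpr ?_)
    have hf' : (1:ℝ) ≤ f := by exact_mod_cast hf
    have hk4 : (0:ℝ) ≤ (k:ℝ)^4 := by positivity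
    refine mul_le_mul_of_nonneg_left (pow_le_pow_left₀ (by positivity) ?_ _) (by positivity)
    push_cast
    nlinarith
  · intro x y h
    have h1 := hcon x h.2.1
    have h2 : (⌊D⌋₊ : ℝ) < ((U.filter (fun z => Hg.Adj x z)).card : ℝ) := (Nat.floor_le hD0).trans_lt (by convert h1)
    have h3 : ⌊D⌋₊ < (U.filter (fun z => Hg.Adj x z)).card := by exact_mod_cast h2
    have h4 : (U.filter (fun z => Hg.Adj x z)).card ≤ (Finset.univ.filter (fun z => Hg.Adj x z ∧ x ∈ U ∧ z ∈ U)).card := ?_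
    · have h5 := Nat.succ_le_of_lt (h3.trans_le h4)
      rw [Nat.succ_eq_add_one] at h5
      convert h5
    refine Finset.card_le_card ?_
    intro z hz
    rw [Finset.mem_filter] at hz ⊢
    exact ⟨Finset.mem_univ _, hz.2, h.2.1, hz.1⟩
  · obtain ⟨x, hx⟩ := hU
    have h1 := hD0.trans_lt (hcon x hx)
    have h2 := Nat.cast_pos.mp h1
    obtain ⟨z, hz⟩ := Finset.card_pos.mp h2
    rw [Finset.mem_filter] at hz
    exact ⟨x, z, hz.2, hx, hz.1⟩
  · intro u v y y'
    rw [Sym2.eq_swap (a := u), Sym2.eq_swap (a := y)]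
  · intro u v y
    convert deg_insert (Fm s(u,v)) f (hFm _) s(u,v) y
  · intro p hp w hw
    exact closed_blocked Hg.edgeSet Fm k hbl p hp w (fun i => (hw i).1)

theorem fd_greedy_spanner_exists :
    ∃ A : ℝ, 0 < A ∧
      ∀ (n k f : ℕ), 0 < n → 0 < k → 0 < f →
        ∀ (V : Type) [Fintype V], Fintype.card V = n →
          ∀ (G : SimpleGraph V) (w : Sym2 V → ℝ), (∀ e ∈ G.edgeSet, 0 < w e) →
            ∃ H : SimpleGraph V, H ≤ G ∧
              (H.edgeSet.ncard : ℝ) ≤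
                (f : ℝ) ^ (1 - 1 / (k : ℝ)) * (n : ℝ) ^ (1 + 1 / (k : ℝ)) * (A * k) ^ k ∧
              ∀ F : Set (Sym2 V), F ⊆ G.edgeSet → DegLE F f →
                ∀ u v : V,
                  wdist (H.deleteEdges F) w u v ≤
                    ((2 * k - 1 : ℕ) : ℝ≥0∞) * wdist (G.deleteEdges F) w u v := by
  refine ⟨512, by norm_num, ?_⟩
  intro n k f hn hk hf V _ hcard G w hw
  classical
  obtain ⟨H, Fm, hHS, hFm, hsp, hbl⟩ := greedy w k f hk G.edgeFinset
  have hHG : ∀ e ∈ H, e ∈ G.edgeSet := fun e he => by simpa using hHS he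
  have hes : (SimpleGraph.fromEdgeSet (H : Set (Sym2 V))).edgeSet = H := by
    rw [SimpleGraph.edgeSet_fromEdgeSet]
    refine sdiff_eq_left.mpr (Set.disjoint_left.mpr ?_)
    intro e he he'
    exact G.not_isDiag_of_mem_edgeSet (hHG e he) he'
  set Hg := SimpleGraph.fromEdgeSet (H : Set (Sym2 V)) with hHg
  clear_value Hg
  refine ⟨Hg, ?_, ?_, ?_⟩
  · rw [← SimpleGraph.edgeSet_subset_edgeSet, hes]
    exact fun e he => hHG e he
  · have h1 := degen Hg.Adj (fun x y h => h.symm) (fun x h => Hg.loopless.irrefl x h) (DEL n k f)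
      (by
        intro U hU
        have := low_degree Hg Fm k f hk hf hFm (by rw [hes]; exact hbl) U hU
        rw [hcard] at this
        exact this) Finset.univ
    have h2 := Hg.sum_degrees_eq_twice_card_edges
    have h3 : (∑ x, ((Finset.univ.filter (fun z => Hg.Adj x z)).card : ℝ)) = 2 * (Hg.edgeSet.ncard : ℝ) := by
      have e1 : Hg.edgeSet.ncard = Hg.edgeFinset.card := by
        rw [← SimpleGraph.coe_edgeFinset, Set.ncard_coe_finset]
      rw [e1]
      have h4 : (∑ x, ((Finset.univ.filter (fun z => Hg.Adj x z)).card)) = 2 * Hg.edgeFinset.card := by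
        rw [← h2]
        refine Finset.sum_congr rfl fun x _ => ?_
        rw [← SimpleGraph.card_neighborFinset_eq_degree, SimpleGraph.neighborFinset_eq_filter]
      exact_mod_cast h4
    have h5 : 2 * (Hg.edgeSet.ncard : ℝ) ≤ 2 * DEL n k f * n := by
      rw [← h3, ← hcard, ← Finset.card_univ]
      rw [← hcard, ← Finset.card_univ] at h1
      convert h1
    have h6 := DEL_arith n k f hn hk hf
    linarith
  · intro F hFG hF u v
    refine spanner_of_edges_s7 (G.deleteEdges F) (Hg.deleteEdges F) w _ (ENNReal.natCast_ne_top _)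
      (by rw [Nat.cast_ne_zero]; omega) ?_ u v
    intro u v huv
    rw [SimpleGraph.deleteEdges_adj] at huv
    obtain ⟨x, y, hxy, l, hl, hwk⟩ := hsp s(u,v) (by simpa using huv.1) F hF huv.2
    have h1 := wdist_HW (Hg.deleteEdges F) w (w s(u,v)) _ (by
      rintro e ⟨h1, h2, h3⟩
      refine ⟨?_, h3⟩
      rw [SimpleGraph.edgeSet_deleteEdges, hes]
      exact ⟨h1, h2⟩) l x y hwk
    have h2 : wdist (Hg.deleteEdges F) w u v ≤ wdist (Hg.deleteEdges F) w x y := by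
      rcases Sym2.eq_iff.mp hxy with ⟨rfl, rfl⟩ | ⟨rfl, rfl⟩
      · exact le_rfl
      · exact wdist_comm _ _ _ _
    refine (h2.trans h1).trans ?_
    gcongr
end

section
/- There exists an absolute constant A > 0 such that for all positive integers n, k, f, any n-vertex graph H equipped with a strict linear order on its edges that admits an f-FD 2k-blocking set satisfies |E(H)| ≤ f^{1−1/k} · n^{1+1/k} · (A·k)^k. -/
open SimpleGraph

/-- `lt` is a strict linear order on the edges of `H`. -/
def IsEdgeOrder {V : Type} (H : SimpleGraph V) (lt : Sym2 V → Sym2 V → Prop) : Prop :=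
  (∀ e ∈ H.edgeSet, ¬ lt e e) ∧
  (∀ e₁ ∈ H.edgeSet, ∀ e₂ ∈ H.edgeSet, ∀ e₃ ∈ H.edgeSet, lt e₁ e₂ → lt e₂ e₃ → lt e₁ e₃) ∧
  (∀ e₁ ∈ H.edgeSet, ∀ e₂ ∈ H.edgeSet, e₁ ≠ e₂ → lt e₁ e₂ ∨ lt e₂ e₁)

/-- `Fb` is an `f`-FD `k`-blocking set for `H` with respect to the edge order `lt`:
each edge `e` gets a set `Fb e` of earlier edges of `H` with faulty-degree at most `f`,
and every cycle with at most `k` edges is "blocked" at its latest edge. -/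
def IsFDBlockingSet {V : Type} (H : SimpleGraph V) (lt : Sym2 V → Sym2 V → Prop)
    (f k : ℕ) (Fb : Sym2 V → Set (Sym2 V)) : Prop :=
  (∀ e ∈ H.edgeSet, Fb e ⊆ H.edgeSet) ∧
  (∀ e ∈ H.edgeSet, ∀ v : V, {e' ∈ Fb e | v ∈ e'}.ncard ≤ f) ∧
  (∀ e ∈ H.edgeSet, ∀ e' ∈ Fb e, lt e' e) ∧
  (∀ (v : V) (p : H.Walk v v), p.IsCycle → p.length ≤ k →
    ∀ e ∈ p.edges, (∀ e' ∈ p.edges, e' ≠ e → lt e' e) →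
      ∃ e' ∈ Fb e, e' ∈ p.edges)

namespace FDB

open Finset

open scoped Classical in
theorem exists_initial {α : Type} (r : α → α → Prop) (A : Finset α)
    (htr : ∀ a ∈ A, ∀ b ∈ A, ∀ c ∈ A, r a b → r b c → r a c)
    (hirr : ∀ a ∈ A, ¬ r a a)
    (htot : ∀ a ∈ A, ∀ b ∈ A, a ≠ b → r a b ∨ r b a) (d : ℕ) :
    ∃ S ⊆ A, S.card ≤ d ∧ ∀ y ∈ A, y ∉ S → S.card = d ∧ ∀ z ∈ S, r z y := by
  induction d with
  | zero => exact ⟨∅, by simp, by simp, by simp⟩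
  | succ d ih =>
    obtain ⟨S, hSA, hc, hS⟩ := ih
    by_cases hne : (A \ S).Nonempty
    · have hmin : ∀ B : Finset α, B ⊆ A → B.Nonempty → ∃ m ∈ B, ∀ b ∈ B, b ≠ m → r m b := by
        intro B
        induction B using Finset.induction_on with
        | empty => simp
        | insert a B ha ihB =>
          intro hB _
          have haA : a ∈ A := hB (mem_insert_self _ _)
          have hBA : B ⊆ A := fun x hx => hB (mem_insert_of_mem hx)
          by_cases hBn : B.Nonempty
          · obtain ⟨m, hm, hmm⟩ := ihB hBA hBn
            have ham : a ≠ m := fun h => ha (h ▸ hm)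
            rcases htot a haA m (hBA hm) ham with h | h
            · refine ⟨a, mem_insert_self _ _, ?_⟩
              intro b hb hne
              rcases mem_insert.1 hb with rfl | hb
              · exact absurd rfl hne
              · by_cases hbm : b = m
                · exact hbm ▸ h
                · exact htr a haA m (hBA hm) b (hBA hb) h (hmm b hb hbm)
            · refine ⟨m, mem_insert_of_mem hm, ?_⟩
              intro b hb hne
              rcases mem_insert.1 hb with rfl | hb
              · exact h
              · exact hmm b hb hne
          · rw [not_nonempty_iff_eq_empty] at hBn
            subst hBn
            exact ⟨a, by simp, by simp⟩
      obtain ⟨m, hm, hmm⟩ := hmin _ sdiff_subset hne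
      rw [mem_sdiff] at hm
      have hSd := hS m hm.1 hm.2
      refine ⟨insert m S, insert_subset hm.1 hSA, ?_, ?_⟩
      · rw [card_insert_of_notMem hm.2]; omega
      · intro y hy hyS
        rw [mem_insert, not_or] at hyS
        refine ⟨by rw [card_insert_of_notMem hm.2]; omega, ?_⟩
        intro z hz
        rcases mem_insert.1 hz with rfl | hz
        · exact hmm y (mem_sdiff.2 ⟨hy, hyS.2⟩) hyS.1
        · exact (hS y hy hyS.2).2 z hz
    · rw [not_nonempty_iff_eq_empty, sdiff_eq_empty_iff_subset] at hne
      exact ⟨S, hSA, by omega, fun y hy h => absurd (hne hy) h⟩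

theorem star {V : Type} {H : SimpleGraph V} {lt : Sym2 V → Sym2 V → Prop}
    {Fb : Sym2 V → Set (Sym2 V)} {f k : ℕ} (ho : IsEdgeOrder H lt)
    (hb : IsFDBlockingSet H lt f (2 * k) Fb) {u v : V} (h : H.Adj u v)
    (w : H.Walk v u) (hl : w.length + 1 ≤ 2 * k) (hlt : ∀ e ∈ w.edges, lt e s(u, v)) :
    ∃ e ∈ Fb s(u, v), e ∈ w.edges := by
  classical
  have hsub : w.bypass.edges ⊆ w.edges := w.edges_bypass_subset_edges
  have hnot : s(u, v) ∉ w.bypass.edges := fun hm =>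
    ho.1 _ ((H.mem_edgeSet).2 h) (hlt _ (hsub hm))
  have hcyc : (SimpleGraph.Walk.cons h w.bypass).IsCycle :=
    (SimpleGraph.Walk.cons_isCycle_iff _ h).2 ⟨w.bypass_isPath, hnot⟩
  have hlen : (SimpleGraph.Walk.cons h w.bypass).length ≤ 2 * k := by
    have := w.length_bypass_le_length
    simp only [SimpleGraph.Walk.length_cons]; omega
  obtain ⟨e', he', hm⟩ := hb.2.2.2 u _ hcyc hlen s(u, v) (by simp) (by
    intro e' he' hne
    rw [SimpleGraph.Walk.edges_cons, List.mem_cons] at he'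
    rcases he' with he' | he'
    · exact absurd he' hne
    · exact hlt _ (hsub he'))
  rw [SimpleGraph.Walk.edges_cons, List.mem_cons] at hm
  rcases hm with rfl | hm
  · exact absurd (hb.2.2.1 _ ((H.mem_edgeSet).2 h) _ he') (ho.1 _ ((H.mem_edgeSet).2 h))
  · exact ⟨e', he', hsub hm⟩

def edg {V : Type} : V → List V → List (Sym2 V)
  | _, [] => []
  | s, x :: l => s(s, x) :: edg x l

def endp {V : Type} : V → List V → V
  | s, [] => s
  | _, x :: l => endp x l

open scoped Classical in
noncomputable def allW {V : Type} (N : ℕ → V → Finset V) : ℕ → V → Finset (List V)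
  | 0, _ => {[]}
  | j + 1, s => (N j s).biUnion fun x => (allW N j x).image (List.cons x)

open scoped Classical in
noncomputable def preOf {V : Type} (N : ℕ → V → Finset V) (Fb : Sym2 V → Set (Sym2 V))
    (G : V → Finset (List V)) (j : ℕ) (s : V) : Finset (List V) :=
  (N j s).biUnion fun x =>
    ((G x).filter fun l => ∀ e ∈ edg x l, e ∉ Fb s(s, x)).image (List.cons x)

open scoped Classical in
noncomputable def good {V : Type} (N : ℕ → V → Finset V) (Fb : Sym2 V → Set (Sym2 V))
    (cap : ℕ → ℕ) : ℕ → V → Finset (List V)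
  | 0, _ => {[]}
  | j + 1, s => (preOf N Fb (good N Fb cap j) j s).filter fun l =>
      ((preOf N Fb (good N Fb cap j) j s).filter fun l' => endp s l' = endp s l).card
        ≤ cap (j + 1)

section
variable {V : Type} {N : ℕ → V → Finset V} {Fb : Sym2 V → Set (Sym2 V)} {cap : ℕ → ℕ}

theorem mem_allW {j : ℕ} {s : V} {l : List V} :
    l ∈ allW N (j + 1) s ↔ ∃ x ∈ N j s, ∃ l' ∈ allW N j x, l = x :: l' := by
  simp [allW, eq_comm]

theorem mem_pre {G : V → Finset (List V)} {j : ℕ} {s : V} {l : List V} :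
    l ∈ preOf N Fb G j s ↔
      ∃ x ∈ N j s, ∃ l' ∈ G x, (∀ e ∈ edg x l', e ∉ Fb s(s, x)) ∧ l = x :: l' := by
  simp [preOf, eq_comm, and_assoc]

theorem good_sub_all (j : ℕ) : ∀ s, good N Fb cap j s ⊆ allW N j s := by
  induction j with
  | zero => intro s; simp [good, allW]
  | succ j ih =>
    intro s l hl
    rw [good, mem_filter] at hl
    obtain ⟨x, hx, l', hl', -, rfl⟩ := mem_pre.1 hl.1
    exact mem_allW.2 ⟨x, hx, l', ih _ hl', rfl⟩

theorem pre_sub_all (j : ℕ) (s : V) :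
    preOf N Fb (good N Fb cap j) j s ⊆ allW N (j+1) s := by
  intro l hl
  obtain ⟨x, hx, l', hl', -, rfl⟩ := mem_pre.1 hl
  exact mem_allW.2 ⟨x, hx, l', good_sub_all _ _ hl', rfl⟩

open scoped Classical in
theorem good_fiber (h0 : 1 ≤ cap 0) (j : ℕ) (s t : V) :
    ((good N Fb cap j s).filter fun l => endp s l = t).card ≤ cap j := by
  cases j with
  | zero =>
    refine le_trans (card_filter_le _ _) ?_
    simpa [good] using h0
  | succ j =>
    by_cases hne : ((good N Fb cap (j+1) s).filter fun l => endp s l = t).Nonempty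
    · obtain ⟨l, hl⟩ := hne
      rw [mem_filter, good, mem_filter] at hl
      obtain ⟨⟨h1, h2⟩, rfl⟩ := hl
      refine le_trans (card_le_card ?_) h2
      intro l' hl'
      rw [mem_filter, good, mem_filter] at hl'
      exact mem_filter.2 ⟨hl'.1.1, hl'.2⟩
    · rw [not_nonempty_iff_eq_empty] at hne
      rw [hne]; simp

theorem card_all {d : ℕ} (hN : ∀ i x, (N i x).card ≤ d) (j : ℕ) :
    ∀ s, (allW N j s).card ≤ d ^ j := by
  classical
  induction j with
  | zero => intro s; simp [allW]
  | succ j ih =>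
    intro s
    rw [allW, pow_succ, mul_comm]
    refine le_trans (card_biUnion_le_card_mul _ _ (d^j) ?_) (Nat.mul_le_mul_right _ (hN _ _))
    intro x _
    exact le_trans card_image_le (ih x)

open scoped Classical in
theorem card_bad {d f : ℕ} [Fintype V] (hN : ∀ i x, (N i x).card ≤ d) (X : Set (Sym2 V))
    (hX : ∀ y : V, (univ.filter fun z => s(y, z) ∈ X).card ≤ f) (j : ℕ) :
    ∀ s, d * ((allW N j s).filter fun l => ∃ e ∈ edg s l, e ∈ X).card ≤ j * f * d ^ j := by
  induction j with
  | zero => intro s; simp [allW, edg, filter_singleton]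
  | succ j ih =>
    intro s
    have hsub : ((allW N (j+1) s).filter fun l => ∃ e ∈ edg s l, e ∈ X) ⊆
        ((univ.filter fun z => s(s, z) ∈ X).biUnion fun x => (allW N j x).image (List.cons x)) ∪
        ((N j s).biUnion fun x =>
          ((allW N j x).filter fun l => ∃ e ∈ edg x l, e ∈ X).image (List.cons x)) := by
      intro l hl
      rw [mem_filter] at hl
      obtain ⟨hl, e, he, heX⟩ := hl
      obtain ⟨x, hx, l', hl', rfl⟩ := mem_allW.1 hl
      rw [edg, List.mem_cons] at he
      rw [mem_union]
      rcases he with rfl | he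
      · left
        exact mem_biUnion.2 ⟨x, by simpa using heX, mem_image_of_mem _ hl'⟩
      · right
        exact mem_biUnion.2 ⟨x, hx, mem_image_of_mem _ (mem_filter.2 ⟨hl', e, he, heX⟩)⟩
    have h1 := le_trans (card_le_card hsub) (card_union_le _ _)
    have h2 : ((univ.filter fun z => s(s, z) ∈ X).biUnion
        fun x => (allW N j x).image (List.cons x)).card ≤ f * d ^ j := by
      refine le_trans (card_biUnion_le_card_mul _ _ (d^j) ?_) (Nat.mul_le_mul_right _ (hX s))
      intro x _
      exact le_trans card_image_le (card_all hN j x)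
    have h3 : d * ((N j s).biUnion fun x =>
          ((allW N j x).filter fun l => ∃ e ∈ edg x l, e ∈ X).image (List.cons x)).card
          ≤ d * (j * f * d ^ j) := by
      refine le_trans (Nat.mul_le_mul_left _ card_biUnion_le) ?_
      rw [mul_sum]
      refine le_trans (sum_le_card_nsmul _ _ (j * f * d ^ j) ?_) ?_
      · intro x _
        exact le_trans (Nat.mul_le_mul_left _ card_image_le) (ih x)
      · rw [smul_eq_mul]
        exact Nat.mul_le_mul_right _ (hN _ _)
    calc _ ≤ d * (_ + _) := Nat.mul_le_mul_left _ h1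
      _ ≤ d * (f * d ^ j) + d * (j * f * d ^ j) := by
        rw [mul_add]; exact add_le_add (Nat.mul_le_mul_left _ h2) h3
      _ = _ := by ring

theorem walk_of_all {H : SimpleGraph V} (hadj : ∀ i x, ∀ y ∈ N i x, H.Adj x y) (j : ℕ) :
    ∀ s, ∀ l ∈ allW N j s, ∃ w : H.Walk s (endp s l), w.edges = edg s l ∧ w.length = j := by
  induction j with
  | zero =>
    intro s l hl
    simp only [allW, mem_singleton] at hl
    subst hl
    exact ⟨SimpleGraph.Walk.nil, rfl, rfl⟩
  | succ j ih =>
    intro s l hl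
    obtain ⟨x, hx, l', hl', rfl⟩ := mem_allW.1 hl
    obtain ⟨w, hw, hwl⟩ := ih x l' hl'
    have h : ∃ w' : H.Walk s (endp x l'), w'.edges = s(s, x) :: edg x l' ∧ w'.length = j + 1 :=
      ⟨SimpleGraph.Walk.cons (hadj _ _ _ hx) w, by simp [hw], by simp [hwl]⟩
    exact h

theorem decr {H : SimpleGraph V} {lt : Sym2 V → Sym2 V → Prop} (ho : IsEdgeOrder H lt)
    (hadj : ∀ i x, ∀ y ∈ N i x, H.Adj x y)
    (hdec : ∀ i x, ∀ y ∈ N (i+1) x, ∀ z ∈ N i y, lt s(y, z) s(x, y)) (j : ℕ) :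
    ∀ s, ∀ x ∈ N j s, ∀ l ∈ allW N j x, ∀ e ∈ edg x l, e ∈ H.edgeSet ∧ lt e s(s, x) := by
  induction j with
  | zero =>
    intro s x _ l hl e he
    simp only [allW, mem_singleton] at hl
    subst hl
    simp [edg] at he
  | succ j ih =>
    intro s x hx l hl e he
    obtain ⟨y, hy, l', hl', rfl⟩ := mem_allW.1 hl
    rw [edg, List.mem_cons] at he
    have h1 := hdec j s x hx y hy
    have hxy := hadj _ _ _ hy
    rcases he with rfl | he
    · exact ⟨hxy, h1⟩
    · obtain ⟨h2, h3⟩ := ih x y hy l' hl' e he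
      exact ⟨h2, ho.2.1 e h2 s(x,y) hxy s(s,x) (hadj _ _ _ hx) h3 h1⟩

/-- Two pre-good walks with the same end and distinct first edges. -/
theorem pair_blocked {H : SimpleGraph V} {lt : Sym2 V → Sym2 V → Prop} {f k : ℕ}
    (ho : IsEdgeOrder H lt)
    (hb : IsFDBlockingSet H lt f (2 * k) Fb)
    (hadj : ∀ i x, ∀ y ∈ N i x, H.Adj x y)
    (hdec : ∀ i x, ∀ y ∈ N (i+1) x, ∀ z ∈ N i y, lt s(y, z) s(x, y))
    {j : ℕ} (hj : j + 1 ≤ k) {s x y : V} (hx : x ∈ N j s) (hy : y ∈ N j s)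
    {p q : List V} (hp : p ∈ allW N j x) (hq : q ∈ allW N j y)
    (hpF : ∀ e ∈ edg x p, e ∉ Fb s(s, x)) (hend : endp x p = endp y q)
    (hlt : lt s(s, y) s(s, x)) : ∃ e ∈ edg s (y :: q), e ∈ Fb s(s, x) := by
  obtain ⟨w1, hw1, hl1⟩ := walk_of_all hadj j x p hp
  obtain ⟨w2, hw2, hl2⟩ := walk_of_all hadj j y q hq
  have hd1 := decr ho hadj hdec j s x hx p hp
  have hd2 := decr ho hadj hdec j s y hy q hq
  have hsx := hadj _ _ _ hx
  have hsy := hadj _ _ _ hy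
  let w : H.Walk x s := w1.append ((w2.copy rfl hend.symm).reverse.append
    (SimpleGraph.Walk.cons hsy.symm SimpleGraph.Walk.nil))
  have hwe : ∀ e ∈ w.edges, e ∈ edg x p ∨ e ∈ edg y q ∨ e = s(s, y) := by
    intro e he
    simp only [w, SimpleGraph.Walk.edges_append, SimpleGraph.Walk.edges_reverse,
      SimpleGraph.Walk.edges_copy, List.mem_append, List.mem_reverse, hw1, hw2,
      SimpleGraph.Walk.edges_cons, SimpleGraph.Walk.edges_nil, List.mem_singleton] at he
    rw [Sym2.eq_swap (a := s)]
    exact he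
  have hwl : w.length + 1 ≤ 2 * k := by
    simp only [w, SimpleGraph.Walk.length_append, SimpleGraph.Walk.length_reverse,
      SimpleGraph.Walk.length_copy, SimpleGraph.Walk.length_cons, SimpleGraph.Walk.length_nil]
    omega
  obtain ⟨e, heF, he⟩ := star ho hb hsx w hwl (by
    intro e he
    rcases hwe e he with h | h | h
    · exact (hd1 e h).2
    · exact ho.2.1 e (hd2 e h).1 s(s,y) hsy s(s,x) hsx (hd2 e h).2 hlt
    · exact h ▸ hlt)
  refine ⟨e, ?_, heF⟩
  rw [edg, List.mem_cons]
  rcases hwe e he with h | h | h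
  · exact absurd heF (hpF e h)
  · exact Or.inr h
  · exact Or.inl h

open scoped Classical in
theorem overfull [Fintype V] {H : SimpleGraph V} {lt : Sym2 V → Sym2 V → Prop} {f k d : ℕ}
    (ho : IsEdgeOrder H lt)
    (hb : IsFDBlockingSet H lt f (2 * k) Fb)
    (hdeg : ∀ e ∈ H.edgeSet, ∀ y : V, (univ.filter fun z => s(y, z) ∈ Fb e).card ≤ f)
    (hN : ∀ i x, (N i x).card ≤ d)
    (hadj : ∀ i x, ∀ y ∈ N i x, H.Adj x y)
    (hdec : ∀ i x, ∀ y ∈ N (i+1) x, ∀ z ∈ N i y, lt s(y, z) s(x, y)) (h0 : 1 ≤ cap 0)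
    {j : ℕ} (hj : j + 1 ≤ k) (s : V) :
    (preOf N Fb (good N Fb cap j) j s \ good N Fb cap (j+1) s).card * cap (j+1) ≤
      (1 + 2 * (j+1) * f) * cap j * d ^ (j+1) := by
  set P := preOf N Fb (good N Fb cap j) j s with hP
  set O := P \ good N Fb cap (j+1) s with hO
  -- all pairs
  let T : Finset (List V × List V) := (P ×ˢ P).filter fun pq => endp s pq.1 = endp s pq.2
  let R : Finset (List V × List V) := (N j s).biUnion fun x =>
    ((allW N (j+1) s).filter fun l => ∃ e ∈ edg s l, e ∈ Fb s(s, x)).biUnion fun q =>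
      ((good N Fb cap j x).filter fun p => endp x p = endp s q).image fun p => (x :: p, q)
  let D : Finset (List V × List V) := (N j s).biUnion fun x =>
    (allW N j x).biUnion fun q =>
      ((good N Fb cap j x).filter fun p => endp x p = endp x q).image fun p => (x :: p, x :: q)
  have hlow : O.card * cap (j+1) ≤ T.card := by
    have h1 : (O.biUnion fun q => (P.filter fun p => endp s p = endp s q).image
        fun p => (p, q)) ⊆ T := by
      intro pq hpq
      simp only [mem_biUnion, mem_image, mem_filter] at hpq
      obtain ⟨q, hq, p, ⟨hp, he⟩, rfl⟩ := hpq
      exact mem_filter.2 ⟨mem_product.2 ⟨hp, (mem_sdiff.1 hq).1⟩, he⟩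
    refine le_trans ?_ (card_le_card h1)
    rw [card_biUnion]
    · rw [← smul_eq_mul]
      refine card_nsmul_le_sum _ _ _ ?_
      intro q hq
      rw [card_image_of_injective _ (fun a b h => (Prod.ext_iff.1 h).1)]
      rw [hO, mem_sdiff, good, mem_filter, not_and] at hq
      have := hq.2 hq.1
      rw [← hP] at this
      omega
    · intro a _ b _ hab
      rw [Function.onFun, Finset.disjoint_left]
      intro pq h1 h2
      simp only [mem_image] at h1 h2
      obtain ⟨_, _, rfl⟩ := h1
      obtain ⟨_, _, h⟩ := h2
      exact hab (Prod.ext_iff.1 h).2.symm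
  have hsub : T ⊆ D ∪ (R ∪ R.image Prod.swap) := by
    rintro ⟨p', q'⟩ hpq
    rw [mem_filter, mem_product] at hpq
    obtain ⟨⟨hp, hq⟩, he⟩ := hpq
    have hpa := pre_sub_all _ _ hp
    have hqa := pre_sub_all _ _ hq
    obtain ⟨x, hx, p, hpg, hpF, rfl⟩ := mem_pre.1 hp
    obtain ⟨y, hy, q, hqg, hqF, rfl⟩ := mem_pre.1 hq
    simp only [endp] at he
    rw [mem_union, mem_union]
    by_cases hxy : x = y
    · subst hxy
      left
      simp only [D, mem_biUnion, mem_image, mem_filter]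
      exact ⟨x, hx, q, good_sub_all _ _ hqg, p, ⟨hpg, he⟩, rfl⟩
    · right
      have hne : s(s, y) ≠ s(s, x) := by
        intro h
        rw [Sym2.congr_right] at h
        exact hxy h.symm
      rcases ho.2.2 s(s, y) (hadj _ _ _ hy) s(s, x) (hadj _ _ _ hx) hne with h | h
      · left
        have := pair_blocked ho hb hadj hdec hj hx hy (good_sub_all _ _ hpg)
          (good_sub_all _ _ hqg) hpF he h
        simp only [R, mem_biUnion, mem_image, mem_filter]
        exact ⟨x, hx, y :: q, ⟨hqa, this⟩, p, ⟨hpg, he⟩, rfl⟩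
      · right
        have := pair_blocked ho hb hadj hdec hj hy hx (good_sub_all _ _ hqg)
          (good_sub_all _ _ hpg) hqF he.symm h
        refine mem_image.2 ⟨(y :: q, x :: p), ?_, rfl⟩
        simp only [R, mem_biUnion, mem_image, mem_filter]
        exact ⟨y, hy, x :: p, ⟨hpa, this⟩, q, ⟨hqg, he.symm⟩, rfl⟩
  have hD : D.card ≤ d * (d ^ j * cap j) := by
    refine le_trans (card_biUnion_le_card_mul _ _ (d^j * cap j) ?_)
      (Nat.mul_le_mul_right _ (hN _ _))
    intro x _
    refine le_trans (card_biUnion_le_card_mul _ _ (cap j) ?_)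
      (Nat.mul_le_mul_right _ (card_all hN _ _))
    intro q _
    exact le_trans card_image_le (good_fiber h0 _ _ _)
  have hR : R.card ≤ (j+1) * f * d^(j+1) * cap j := by
    by_cases hd : d = 0
    · have : N j s = ∅ := by
        have := hN j s
        rw [hd] at this
        exact card_eq_zero.1 (by omega)
      simp [R, this]
    have hd' : 0 < d := Nat.pos_of_ne_zero hd
    refine Nat.le_of_mul_le_mul_left (c := d) ?_ hd'
    refine le_trans (Nat.mul_le_mul_left _ card_biUnion_le) ?_
    rw [mul_sum]
    refine le_trans (sum_le_card_nsmul _ _ ((j+1) * f * d ^ (j+1) * cap j) ?_) ?_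
    · intro x hx
      have hbad := card_bad hN (Fb s(s,x)) (hdeg _ (hadj _ _ _ hx)) (j+1) s
      calc _ ≤ d * (_ * cap j) := Nat.mul_le_mul_left _ (card_biUnion_le_card_mul _ _ (cap j) (by
              intro q _
              exact le_trans card_image_le (good_fiber h0 _ _ _)))
        _ ≤ _ := by rw [← mul_assoc]; exact Nat.mul_le_mul_right _ hbad
    · rw [smul_eq_mul]
      exact Nat.mul_le_mul_right _ (hN _ _)
  have hfin := le_trans (card_le_card hsub)
    (le_trans (card_union_le _ _) (Nat.add_le_add_left (card_union_le _ _) _))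
  have hRs : (R.image Prod.swap).card ≤ R.card := card_image_le
  calc _ ≤ T.card := hlow
    _ ≤ d * (d ^ j * cap j) + ((j+1) * f * d^(j+1) * cap j + (j+1) * f * d^(j+1) * cap j) := by
      omega
    _ = _ := by ring

open scoped Classical in
theorem good_count [Fintype V] {H : SimpleGraph V} {lt : Sym2 V → Sym2 V → Prop} {f k d : ℕ}
    (hf : 0 < f) (hk : 0 < k)
    (ho : IsEdgeOrder H lt)
    (hb : IsFDBlockingSet H lt f (2 * k) Fb)
    (hdeg : ∀ e ∈ H.edgeSet, ∀ y : V, (univ.filter fun z => s(y, z) ∈ Fb e).card ≤ f)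
    (hN : ∀ i x, (N i x).card ≤ d)
    (hadj : ∀ i x, ∀ y ∈ N i x, H.Adj x y)
    (hdec : ∀ i x, ∀ y ∈ N (i+1) x, ∀ z ∈ N i y, lt s(y, z) s(x, y))
    (hact : ∀ i x, ∀ y ∈ N (i+1) x, (N i y).card = d)
    (hcap : ∀ j, cap j = (12 * k ^ 2 * f) ^ (j - 1))
    (hd : 4 * k ^ 2 * f ≤ d) (j : ℕ) : j ≤ k → ∀ s, (∀ i, j = i + 1 → (N i s).card = d) →
      2 * k * d ^ j ≤ 2 * k * (good N Fb cap j s).card + j * d ^ j := by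
  have hdpos : 0 < d := lt_of_lt_of_le (by positivity) hd
  have h0 : 1 ≤ cap 0 := by simp [hcap]
  induction j with
  | zero => intro _ s _; simp [good]
  | succ j ih =>
    intro hj s hs
    have hNs : (N j s).card = d := hs j rfl
    set P := preOf N Fb (good N Fb cap j) j s with hP
    -- size of P
    have hPc : P.card = ∑ x ∈ N j s,
        ((good N Fb cap j x).filter fun l => ∀ e ∈ edg x l, e ∉ Fb s(s, x)).card := by
      rw [hP, preOf, card_biUnion]
      · refine sum_congr rfl fun x _ => ?_
        have hi : Function.Injective (List.cons x) := fun a b h => (List.cons.inj h).2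
        rw [card_image_of_injective _ hi]
        congr!
      · intro a _ b _ hab
        rw [Function.onFun, Finset.disjoint_left]
        intro l h1 h2
        simp only [mem_image] at h1 h2
        obtain ⟨_, _, rfl⟩ := h1
        obtain ⟨_, _, h⟩ := h2
        exact hab (List.cons.inj h).1.symm
    have hPlow : 4 * k * d ^ (j+1) ≤ 4 * k * P.card + (2 * j + 1) * d ^ (j+1) := by
      have hx : ∀ x ∈ N j s, 4 * k * d ^ j ≤ 4 * k * ((good N Fb cap j x).filter
          fun l => ∀ e ∈ edg x l, e ∉ Fb s(s, x)).card + (2 * j + 1) * d ^ j := by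
        intro x hx
        have h1 := ih (by omega) x (by rintro i rfl; exact hact _ _ _ hx)
        have h2 := card_bad hN (Fb s(s,x)) (hdeg _ (hadj _ _ _ hx)) j x
        have h3 : (good N Fb cap j x).card ≤ ((good N Fb cap j x).filter
            fun l => ∀ e ∈ edg x l, e ∉ Fb s(s, x)).card +
            ((allW N j x).filter fun l => ∃ e ∈ edg x l, e ∈ Fb s(s, x)).card := by
          rw [← card_filter_add_card_filter_not (s := good N Fb cap j x)
            (fun l => ∀ e ∈ edg x l, e ∉ Fb s(s, x))]
          refine Nat.add_le_add_left (card_le_card ?_) _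
          intro l hl
          rw [mem_filter] at hl ⊢
          refine ⟨good_sub_all _ _ hl.1, ?_⟩
          have := hl.2
          push Not at this
          exact this
        set b := ((allW N j x).filter fun l => ∃ e ∈ edg x l, e ∈ Fb s(s, x)).card
        have h4 : 4 * k * b ≤ d ^ j := by
          refine Nat.le_of_mul_le_mul_left (c := d) ?_ hdpos
          calc d * (4 * k * b) = 4 * k * (d * b) := by ring
            _ ≤ 4 * k * (j * f * d ^ j) := Nat.mul_le_mul_left _ h2
            _ ≤ 4 * k * (k * f * d ^ j) := by gcongr; omega
            _ = (4 * k ^ 2 * f) * d ^ j := by ring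
            _ ≤ _ := Nat.mul_le_mul_right _ hd
        nlinarith
      have hsum := sum_le_sum hx
      rw [sum_add_distrib, ← mul_sum (N j s) (fun x => ((good N Fb cap j x).filter
          fun l => ∀ e ∈ edg x l, e ∉ Fb s(s, x)).card), ← hPc] at hsum
      simp only [sum_const, hNs, smul_eq_mul] at hsum
      calc _ = d * (4 * k * d ^ j) := by ring
        _ ≤ _ := hsum
        _ = _ := by ring
    have hOc : 4 * k * (P \ good N Fb cap (j+1) s).card ≤ d ^ (j+1) := by
      by_cases hj0 : j = 0
      · subst hj0
        have : P \ good N Fb cap (0+1) s = ∅ := by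
          rw [sdiff_eq_empty_iff_subset]
          intro l hl
          rw [good, mem_filter]
          refine ⟨hl, ?_⟩
          rw [hcap]
          simp only [zero_add, Nat.sub_self, pow_zero]
          rw [card_le_one]
          intro a ha b hb'
          rw [mem_filter] at ha hb'
          have hab := ha.2.trans hb'.2.symm
          obtain ⟨x, _, p, hp, _, rfl⟩ := mem_pre.1 ha.1
          obtain ⟨y, _, q, hq, _, rfl⟩ := mem_pre.1 hb'.1
          simp only [good, mem_singleton] at hp hq
          subst hp hq
          simp only [endp] at hab
          rw [hab]
        rw [this]; simp
      · have := overfull (cap := cap) ho hb hdeg hN hadj hdec h0 hj s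
        rw [← hP] at this
        set o := (P \ good N Fb cap (j+1) s).card
        have hc : cap (j+1) = (12 * k ^ 2 * f) * cap j := by
          rw [hcap, hcap]
          obtain ⟨i, rfl⟩ : ∃ i, j = i + 1 := ⟨j - 1, by omega⟩
          simp only [Nat.add_sub_cancel]
          rw [pow_succ, mul_comm]
        have hcp : 0 < cap j := by rw [hcap]; positivity
        rw [hc] at this
        have h5 : 1 + 2 * (j+1) * f ≤ 3 * k * f := by nlinarith
        have h6 : (3 * k * f * cap j) * (4 * k * o) ≤ (3 * k * f * cap j) * d ^ (j+1) := by
          calc _ = o * (12 * k ^ 2 * f * cap j) := by ring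
            _ ≤ _ := this
            _ ≤ (3 * k * f) * cap j * d ^ (j+1) := by gcongr
        exact Nat.le_of_mul_le_mul_left h6 (by positivity)
    have hsplit : P.card ≤ (good N Fb cap (j+1) s).card + (P \ good N Fb cap (j+1) s).card := by
      have := card_le_card (subset_union_right (s₁ := good N Fb cap (j+1) s) (s₂ := P))
      rw [← union_sdiff_self_eq_union] at this
      exact le_trans this (card_union_le _ _)
    nlinarith
end

open scoped Classical in
theorem core {V : Type} [Fintype V] {H : SimpleGraph V} {lt : Sym2 V → Sym2 V → Prop}
    {Fb : Sym2 V → Set (Sym2 V)} {f k d : ℕ}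
    (hf : 0 < f) (hk : 0 < k)
    (ho : IsEdgeOrder H lt)
    (hb : IsFDBlockingSet H lt f (2 * k) Fb)
    (hd : 4 * k ^ 2 * f ≤ d)
    (hd2 : 2 * Fintype.card V * (12 * k ^ 2 * f) ^ (k - 1) < d ^ k) :
    H.edgeSet.ncard ≤ k * (Fintype.card V * d) := by
  by_contra hcon
  push Not at hcon
  have hdeg : ∀ e ∈ H.edgeSet, ∀ y : V, (univ.filter fun z => s(y, z) ∈ Fb e).card ≤ f := by
    intro e he y
    refine le_trans ?_ (hb.2.1 e he y)
    rw [← Set.ncard_coe_finset]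
    refine Set.ncard_le_ncard_of_injOn (fun z => s(y, z)) ?_ ?_ (Set.toFinite _)
    · intro z hz
      simp only [coe_filter, mem_univ, true_and, Set.mem_setOf_eq] at hz
      exact ⟨hz, Sym2.mem_mk_left _ _⟩
    · intro a _ b _ h
      exact Sym2.congr_right.1 h
  -- selection
  have hsel : ∀ (E : Finset (Sym2 V)) (x : V), ∃ S : Finset V, ((E : Set (Sym2 V)) ⊆ H.edgeSet →
      (∀ y ∈ S, s(x, y) ∈ E) ∧ ∀ y, s(x, y) ∈ E → y ∉ S →
        S.card = d ∧ ∀ z ∈ S, lt s(x, z) s(x, y)) ∧ S.card ≤ d := by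
    intro E x
    by_cases hE : (E : Set (Sym2 V)) ⊆ H.edgeSet
    · obtain ⟨S, h1, h2, h3⟩ := exists_initial (fun a b => lt s(x, a) s(x, b))
        (univ.filter fun y => s(x, y) ∈ E)
        (by
          intro a ha b hb c hc
          simp only [mem_filter, mem_univ, true_and] at ha hb hc
          exact ho.2.1 _ (hE ha) _ (hE hb) _ (hE hc))
        (by
          intro a ha
          simp only [mem_filter, mem_univ, true_and] at ha
          exact ho.1 _ (hE ha))
        (by
          intro a ha b hb hab
          simp only [mem_filter, mem_univ, true_and] at ha hb
          exact ho.2.2 _ (hE ha) _ (hE hb) (fun h => hab (Sym2.congr_right.1 h))) d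
      refine ⟨S, fun _ => ⟨fun y hy => ?_, fun y hy hyS => ?_⟩, h2⟩
      · simpa using h1 hy
      · exact h3 y (by simpa using hy) hyS
    · exact ⟨∅, fun h => absurd h hE, by simp⟩
  choose S hS hSd using hsel
  let rem : Finset (Sym2 V) → Finset (Sym2 V) := fun E =>
    E \ univ.biUnion fun x => (S E x).image fun y => s(x, y)
  let E : ℕ → Finset (Sym2 V) := fun i => rem^[i] H.edgeSet.toFinset
  have hE0 : E 0 = H.edgeSet.toFinset := rfl
  have hEs : ∀ i, E (i+1) = rem (E i) := fun i => Function.iterate_succ_apply' _ _ _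
  have hEsub : ∀ i, (E i : Set (Sym2 V)) ⊆ H.edgeSet := by
    intro i
    induction i with
    | zero => rw [hE0]; simp
    | succ i ih =>
      rw [hEs]
      refine subset_trans ?_ ih
      exact_mod_cast sdiff_subset
  have hEc : ∀ i, H.edgeSet.ncard ≤ (E i).card + i * (Fintype.card V * d) := by
    intro i
    induction i with
    | zero => rw [hE0, Set.ncard_eq_toFinset_card']; simp
    | succ i ih =>
      have h1 : (E i).card ≤ (E (i+1)).card + Fintype.card V * d := by
        rw [hEs]
        have h2 := le_card_sdiff (univ.biUnion fun x => (S (E i) x).image fun y => s(x, y)) (E i)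
        have h3 : (univ.biUnion fun x => (S (E i) x).image fun y => s(x, y)).card
            ≤ Fintype.card V * d :=
          card_biUnion_le_card_mul _ _ d fun x _ => le_trans card_image_le (hSd _ _)
        change _ ≤ (E i \ (univ.biUnion fun x => (S (E i) x).image fun y => s(x, y))).card + _
        omega
      rw [add_mul]; omega
  let N : ℕ → V → Finset V := fun i x => S (E i) x
  have hN : ∀ i x, (N i x).card ≤ d := fun i x => hSd _ _
  have hNE : ∀ i x, ∀ y ∈ N i x, s(x, y) ∈ E i := fun i x => (hS (E i) x (hEsub i)).1
  have hadj : ∀ i x, ∀ y ∈ N i x, H.Adj x y := fun i x y hy => hEsub i (hNE i x y hy)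
  have hstep : ∀ i x y, s(x, y) ∈ E (i+1) →
      (N i y).card = d ∧ ∀ z ∈ N i y, lt s(y, z) s(x, y) := by
    intro i x y hxy
    rw [hEs, mem_sdiff] at hxy
    rw [Sym2.eq_swap] at hxy ⊢
    refine (hS (E i) y (hEsub i)).2 x hxy.1 ?_
    intro hx
    exact hxy.2 (mem_biUnion.2 ⟨y, mem_univ _, mem_image_of_mem _ hx⟩)
  have hne : (E k).Nonempty := by
    rw [← card_pos]
    have := hEc k
    omega
  obtain ⟨e, he⟩ := hne
  obtain ⟨i, rfl⟩ : ∃ i, k = i + 1 := ⟨k - 1, by omega⟩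
  induction e using Sym2.ind with
  | _ x s =>
  have hs := (hstep i x s he).1
  let cap : ℕ → ℕ := fun j => (12 * (i+1) ^ 2 * f) ^ (j - 1)
  have hg := good_count (N := N) (cap := cap) hf hk ho hb hdeg hN hadj
    (fun i x y hy => (hstep i x y (hNE _ _ _ hy)).2)
    (fun i x y hy => (hstep i x y (hNE _ _ _ hy)).1) (fun _ => rfl) hd (i+1) le_rfl s
    (by intro i' h; obtain rfl : i = i' := by omega
        exact hs)
  have hup : (good N Fb cap (i+1) s).card ≤ cap (i+1) * Fintype.card V := by
    refine card_le_mul_card_image_of_maps_to (f := endp s) (t := univ) (fun _ _ => mem_univ _) _ ?_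
    intro t _
    exact good_fiber (by simp [cap]) _ _ _
  have h7 : d ^ (i+1) ≤ 2 * (good N Fb cap (i+1) s).card := by
    refine Nat.le_of_mul_le_mul_left (c := i+1) ?_ hk
    nlinarith
  have h8 : cap (i+1) = (12 * (i+1) ^ 2 * f) ^ (i + 1 - 1) := rfl
  rw [← h8] at hd2
  nlinarith

end FDB

theorem blocking_set_size_bound :
    ∃ A : ℝ, 0 < A ∧
      ∀ (n k f : ℕ), 0 < n → 0 < k → 0 < f →
        ∀ (V : Type) [Fintype V], Fintype.card V = n →
          ∀ (H : SimpleGraph V) (lt : Sym2 V → Sym2 V → Prop)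
            (Fb : Sym2 V → Set (Sym2 V)),
            IsEdgeOrder H lt → IsFDBlockingSet H lt f (2 * k) Fb →
            (H.edgeSet.ncard : ℝ) ≤
              (f : ℝ) ^ (1 - 1 / (k : ℝ)) * (n : ℝ) ^ (1 + 1 / (k : ℝ)) * (A * k) ^ k := by
  refine ⟨100, by norm_num, ?_⟩
  intro n k f hn hk hf V _ hV H lt Fb ho hb
  have hnR : (0:ℝ) < n := by exact_mod_cast hn
  have hkR : (1:ℝ) ≤ k := by exact_mod_cast hk
  have hfR : (1:ℝ) ≤ f := by exact_mod_cast hf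
  have hk0 : (0:ℝ) < k := by linarith
  have hf0 : (0:ℝ) < f := by linarith
  set X : ℝ := (f : ℝ) ^ (1 - 1 / (k : ℝ)) * (n : ℝ) ^ (1 / (k : ℝ)) with hX
  have hXn : (f : ℝ) ^ (1 - 1 / (k : ℝ)) * (n : ℝ) ^ (1 + 1 / (k : ℝ)) = X * n := by
    rw [Real.rpow_add hnR, Real.rpow_one, hX]; ring
  rw [hXn]
  have hX0 : 0 < X := by positivity
  have hk1 : 0 ≤ 1 - 1 / (k:ℝ) := by
    rw [sub_nonneg, div_le_one hk0]; exact hkR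
  have hpow : (25:ℝ) * k ^ 3 ≤ (100 * k) ^ k := by
    by_cases h3 : 3 ≤ k
    · calc (25:ℝ) * k ^ 3 ≤ (100 * k) ^ 3 := by
            rw [mul_pow]; gcongr; norm_num
        _ ≤ _ := pow_le_pow_right₀ (by linarith) h3
    · have : k = 1 ∨ k = 2 := by omega
      rcases this with rfl | rfl <;> norm_num
  by_cases hfn : n ≤ f
  · have hXge : (n:ℝ) ≤ X := by
      calc (n:ℝ) = (n:ℝ) ^ (1 - 1 / (k : ℝ)) * (n : ℝ) ^ (1 / (k : ℝ)) := by
            rw [← Real.rpow_add hnR]; simp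
        _ ≤ X := by
            rw [hX]; gcongr
    have hm : H.edgeSet.ncard ≤ n * n := by
      classical
      rw [Set.ncard_eq_toFinset_card', Set.toFinset_card, ← SimpleGraph.edgeFinset_card]
      have h1 := H.card_edgeFinset_le_card_choose_two
      rw [hV] at h1
      refine le_trans h1 ?_
      have := Nat.choose_le_pow n 2
      rwa [pow_two] at this
    have hmR : (H.edgeSet.ncard : ℝ) ≤ n * n := by exact_mod_cast hm
    have h1 : (1:ℝ) ≤ (100 * k) ^ k := one_le_pow₀ (by linarith)
    calc (H.edgeSet.ncard : ℝ) ≤ n * n := hmR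
      _ ≤ X * n := by gcongr
      _ ≤ _ := le_mul_of_one_le_right (by positivity) h1
  · push Not at hfn
    have hfnR : (f:ℝ) ≤ n := by exact_mod_cast hfn.le
    have hXge : (f:ℝ) ≤ X := by
      calc (f:ℝ) = (f:ℝ) ^ (1 - 1 / (k : ℝ)) * (f : ℝ) ^ (1 / (k : ℝ)) := by
            rw [← Real.rpow_add hf0]; simp
        _ ≤ X := by
            rw [hX]; gcongr
    have hXk : X ^ k = (f:ℝ) ^ (k - 1) * n := by
      rw [hX, mul_pow, ← Real.rpow_natCast, ← Real.rpow_natCast, ← Real.rpow_mul hf0.le,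
        ← Real.rpow_mul hnR.le, ← Real.rpow_natCast, Nat.cast_sub hk]
      congr 2
      · field_simp
        simp
      · field_simp
        simp
    set d := ⌈24 * (k:ℝ) ^ 2 * X⌉₊ with hd
    have hdl : 24 * (k:ℝ) ^ 2 * X ≤ d := Nat.le_ceil _
    have hdu : (d:ℝ) ≤ 25 * (k:ℝ) ^ 2 * X := by
      have h1 := (Nat.ceil_lt_add_one (show (0:ℝ) ≤ 24 * (k:ℝ) ^ 2 * X by positivity)).le
      have h2 : (1:ℝ) ≤ k ^ 2 * X := one_le_mul_of_one_le_of_one_le (one_le_pow₀ hkR) (by linarith)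
      linarith
    have hcore := FDB.core (d := d) hf hk ho hb (by
        have h1 : (4:ℝ) * k ^ 2 * f ≤ d := by
          refine le_trans ?_ hdl
          gcongr
          norm_num
        exact_mod_cast h1) (by
        rw [hV]
        have h1 : (2:ℝ) * n * (12 * k ^ 2 * f) ^ (k - 1) < d ^ k := by
          refine lt_of_lt_of_le ?_ (pow_le_pow_left₀ (by positivity) hdl k)
          rw [mul_pow (24 * (k:ℝ)^2), hXk, mul_pow (12 * (k:ℝ)^2)]
          have h2 : (2:ℝ) * (12 * k ^ 2) ^ (k - 1) < (24 * k ^ 2) ^ k := by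
            have hk2 : (1:ℝ) ≤ k ^ 2 := one_le_pow₀ hkR
            obtain ⟨i, rfl⟩ : ∃ i, k = i + 1 := ⟨k - 1, by omega⟩
            simp only [Nat.add_sub_cancel]
            rw [pow_succ (24 * _), mul_comm]
            have h3 : (12 * (((i+1 : ℕ):ℝ)) ^ 2) ^ i ≤ (24 * (((i+1 : ℕ):ℝ)) ^ 2) ^ i := by
              gcongr
              norm_num
            have h4 : 0 < (12 * (((i+1 : ℕ):ℝ)) ^ 2) ^ i := by positivity
            nlinarith
          have h5 : 0 < (f:ℝ) ^ (k - 1) * n := by positivity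
          nlinarith [mul_lt_mul_of_pos_right h2 h5]
        exact_mod_cast h1)
    rw [hV] at hcore
    have hcR : (H.edgeSet.ncard : ℝ) ≤ k * (n * d) := by exact_mod_cast hcore
    calc (H.edgeSet.ncard : ℝ) ≤ k * (n * d) := hcR
      _ ≤ k * (n * (25 * (k:ℝ) ^ 2 * X)) := by gcongr
      _ = X * n * (25 * k ^ 3) := by ring
      _ ≤ _ := by gcongr
end

section
/- There exists an absolute constant c > 0 such that for all positive integers f, n, k, every n-vertex unweighted graph G admits an f-FD k^{c·k}-spanner H ⊆ G with at most c·f·n^{1+1/k}·(log n)^c edges. -/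
open SimpleGraph
open scoped ENNReal

def FReach {V : Type} (H : SimpleGraph V) (s : ℕ) (x y : V) : Prop :=
  ∃ p : H.Walk x y, p.length ≤ s

namespace FReach
variable {V : Type} {H H' : SimpleGraph V} {s s' : ℕ} {x y z : V}

lemma refl' : FReach H s x x := ⟨Walk.nil, by simp⟩
lemma symm' (h : FReach H s x y) : FReach H s y x := by
  obtain ⟨p, hp⟩ := h
  exact ⟨p.reverse, by simpa using hp⟩
lemma trans' (h : FReach H s x y) (h' : FReach H s' y z) : FReach H (s + s') x z := by
  obtain ⟨p, hp⟩ := h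
  obtain ⟨p', hp'⟩ := h'
  exact ⟨p.append p', by rw [Walk.length_append]; omega⟩
lemma mono' (hss : s ≤ s') (hH : H ≤ H') (h : FReach H s x y) : FReach H' s' x y := by
  obtain ⟨p, hp⟩ := h
  exact ⟨p.mapLe hH, by simpa using hp.trans hss⟩
lemma adj' (h : H.Adj x y) : FReach H 1 x y := ⟨Walk.cons h Walk.nil, by simp⟩
end FReach

open Classical in
noncomputable def fball {V : Type} [Fintype V] (H : SimpleGraph V) (x : V) (s : ℕ) : Finset V :=
  Finset.univ.filter (fun y => FReach H s x y)

lemma mem_fball {V : Type} [Fintype V] {H : SimpleGraph V} {x y : V} {s : ℕ} :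
    y ∈ fball H x s ↔ FReach H s x y := by
  classical
  simp [fball]

lemma fball_mono {V : Type} [Fintype V] {H H' : SimpleGraph V} {x : V} {s s' : ℕ}
    (hss : s ≤ s') (hH : H ≤ H') : fball H x s ⊆ fball H' x s' := by
  intro y hy
  rw [mem_fball] at *
  exact hy.mono' hss hH

lemma fball_card_pos {V : Type} [Fintype V] (H : SimpleGraph V) (x : V) (s : ℕ) :
    1 ≤ (fball H x s).card := Finset.card_pos.2 ⟨x, mem_fball.2 FReach.refl'⟩

lemma fball_card_pos' {V : Type} [Fintype V] (H : SimpleGraph V) (x : V) (s : ℕ) :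
    (1 : ℝ) ≤ ((fball H x s).card : ℝ) := by exact_mod_cast fball_card_pos H x s

lemma fball_card_mono {V : Type} [Fintype V] {H H' : SimpleGraph V} {x : V} {s s' : ℕ}
    (hss : s ≤ s') (hH : H ≤ H') : ((fball H x s).card : ℝ) ≤ ((fball H' x s').card : ℝ) := by
  exact_mod_cast Finset.card_le_card (fball_mono hss hH)

/-- radii -/
def frad : ℕ → ℕ
  | 0 => 0
  | i + 1 => 3 * frad i + 1

lemma frad_le (i : ℕ) : 2 * frad i + 1 = 3 ^ i := by
  induction i with
  | zero => rfl
  | succ i ih => rw [pow_succ, ← ih, frad]; ring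

lemma select (a b : ℕ → ℝ) (n q : ℝ) (K : ℕ) (hK : 0 < K) (hq : 1 ≤ q) (hqn : n ≤ q ^ K)
    (ha : ∀ i, a i ≤ a (i + 1)) (hb : ∀ i, b i ≤ b (i + 1)) (ha1 : ∀ i, 1 ≤ a i)
    (hb1 : ∀ i, 1 ≤ b i) (han : ∀ i, a i ≤ n) (hbn : ∀ i, b i ≤ n) :
    ∃ i < 2 * K, (b i ≤ a i ∧ b (i + 1) ≤ q * b i) ∨ (a i ≤ b i ∧ a (i + 1) ≤ q * a i) := by
  by_contra! hcon
  have step : ∀ i < 2 * K, q * (a i * b i) < a (i + 1) * b (i + 1) := by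
    intro i hi
    obtain ⟨h1, h2⟩ := hcon i hi
    have := ha1 i
    have := hb1 i
    rcases le_total (b i) (a i) with h | h
    · calc q * (a i * b i) = a i * (q * b i) := by ring
        _ < a i * b (i + 1) := by
          apply mul_lt_mul_of_pos_left (h1 h); linarith
        _ ≤ _ := by
          apply mul_le_mul_of_nonneg_right (ha i); linarith [hb1 (i+1)]
    · calc q * (a i * b i) = (q * a i) * b i := by ring
        _ < a (i + 1) * b i := by
          apply mul_lt_mul_of_pos_right (h2 h); linarith
        _ ≤ _ := by
          apply mul_le_mul_of_nonneg_left (hb i); linarith [ha1 (i+1)]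
  have hall : ∀ i < 2 * K, q ^ (i + 1) < a (i + 1) * b (i + 1) := by
    intro i
    induction i with
    | zero =>
      intro hi
      have := step 0 hi
      have h1 : 1 ≤ a 0 * b 0 := one_le_mul_of_one_le_of_one_le (ha1 0) (hb1 0)
      simp only [zero_add, pow_one] at *
      nlinarith
    | succ i ih =>
      intro hi
      have h1 := ih (by omega)
      have h2 := step (i + 1) hi
      rw [pow_succ']
      nlinarith
  have h := hall (2 * K - 1) (by omega)
  rw [show 2 * K - 1 + 1 = 2 * K by omega] at h
  have h3 : a (2 * K) * b (2 * K) ≤ n * n := by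
    have := ha1 (2*K)
    have := hb1 (2*K)
    have := han (2*K)
    have := hbn (2*K)
    nlinarith
  have h4 : q ^ (2 * K) = q ^ K * q ^ K := by rw [two_mul, pow_add]
  have : 1 ≤ n := (ha1 0).trans (han 0)
  nlinarith

lemma walk_key {V : Type} [Fintype V] {H : SimpleGraph V} {F F' : Set (Sym2 V)} {v : V} {R : ℕ}
    (hF' : ∀ e ∈ F, e ∈ H.edgeSet → (∃ y ∈ e, FReach (H.deleteEdges F) R v y) → e ∈ F') {x y : V}
    (p : (H.deleteEdges F').Walk x y) :
    ∀ i, FReach (H.deleteEdges F) i v x → i + p.length ≤ R + 1 →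
      FReach (H.deleteEdges F) (i + p.length) v y := by
  induction p with
  | nil => intro i h _; simpa using h
  | @cons x z y h p ih =>
    intro i hi hl
    rw [Walk.length_cons] at hl ⊢
    have hz : (H.deleteEdges F).Adj x z := by
      rw [deleteEdges_adj] at h ⊢
      refine ⟨h.1, fun hF => h.2 (hF' _ hF h.1 ⟨x, by simp, hi.mono' (by omega) le_rfl⟩)⟩
    have := ih (i + 1) (hi.trans' (FReach.adj' hz)) (by omega)
    exact this.mono' (by omega) le_rfl

noncomputable def fPhi {V : Type} [Fintype V] (H : SimpleGraph V) (N : ℕ) : ℝ :=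
  ∑ x : V, ∑ i ∈ Finset.range N, Real.log ((fball H x (2 * frad i + 1)).card)

lemma ncard_touch {V : Type} [Fintype V] (F : Set (Sym2 V)) (g : ℕ) (hF : DegLE F g)
    (S : Finset V) : {e ∈ F | ∃ y ∈ e, y ∈ S}.ncard ≤ g * S.card := by
  classical
  have h1 : {e ∈ F | ∃ y ∈ e, y ∈ S} ⊆ ⋃ y ∈ S, {e ∈ F | y ∈ e} := by
    rintro e ⟨he, y, hy, hyS⟩
    simp only [Set.mem_iUnion]
    exact ⟨y, hyS, he, hy⟩
  calc _ ≤ (⋃ y ∈ S, {e ∈ F | y ∈ e}).ncard := Set.ncard_le_ncard h1 (Set.toFinite _)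
    _ ≤ ∑ y ∈ S, {e ∈ F | y ∈ e}.ncard := Finset.set_ncard_biUnion_le _ _
    _ ≤ ∑ y ∈ S, g := Finset.sum_le_sum (fun y _ => hF y)
    _ = _ := by simp [mul_comm]

lemma cut {V : Type} [Fintype V] (H : SimpleGraph V) (N g i : ℕ) (hi : i < N) (q : ℝ) (hq : 1 ≤ q)
    (u v : V) (huv : H.Adj u v) (F : Set (Sym2 V)) (hF : DegLE F g)
    (hr : ¬ FReach (H.deleteEdges F) (4 * frad i + 1) u v)
    (hab : (fball (H.deleteEdges F) v (frad i)).card ≤ (fball (H.deleteEdges F) u (frad i)).card)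
    (hbq : ((fball (H.deleteEdges F) v (frad (i + 1))).card : ℝ) ≤
      q * (fball (H.deleteEdges F) v (frad i)).card) :
    ∃ H1 ≤ H, H1 ≠ H ∧ (H.edgeSet.ncard : ℝ) ≤
      H1.edgeSet.ncard + g * (q * (q + 1)) * (fPhi H N - fPhi H1 N) := by
  classical
  set D := H.deleteEdges F with hD
  set r := frad i with hrdef
  set F' : Set (Sym2 V) := {e ∈ F | ∃ y ∈ e, y ∈ fball D v (3 * r)} with hF'
  set H1 := H.deleteEdges F' with hH1
  have hH1le : H1 ≤ H := deleteEdges_le _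
  have hDle : D ≤ H := deleteEdges_le _
  set b : ℝ := ((fball D v r).card : ℝ) with hb
  have hb1 : 1 ≤ b := fball_card_pos' D v r
  have hcost : (F'.ncard : ℝ) ≤ g * (q * b) := by
    have h1 := ncard_touch F g hF (fball D v (3 * r))
    have h2 : (F'.ncard : ℝ) ≤ g * (fball D v (3 * r)).card := by exact_mod_cast h1
    refine h2.trans (mul_le_mul_of_nonneg_left ?_ (by positivity))
    refine le_trans ?_ hbq
    have : fball D v (3 * r) ⊆ fball D v (frad (i + 1)) :=
      fball_mono (by rw [frad]; omega) le_rfl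
    exact_mod_cast Finset.card_le_card this
  have hterm : ∀ x ∈ fball D v r,
      1 / (q + 1) ≤ Real.log ((fball H x (2 * r + 1)).card) -
        Real.log ((fball H1 x (2 * r + 1)).card) := by
    intro x hx
    rw [mem_fball] at hx
    have hsub : fball H1 x (2 * r + 1) ⊆ fball D v (3 * r + 1) := by
      intro y hy
      rw [mem_fball] at hy ⊢
      obtain ⟨p, hp⟩ := hy
      have := walk_key (R := 3 * r) (v := v) (F := F) (F' := F') (H := H)
        (fun e he _ ⟨y, hy, hyr⟩ => ⟨he, y, hy, mem_fball.2 hyr⟩) p r hx (by omega)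
      exact this.mono' (by omega) le_rfl
    have hdisj : Disjoint (fball H1 x (2 * r + 1)) (fball D u r) := by
      rw [Finset.disjoint_left]
      intro y hy hy'
      have h1 := mem_fball.1 (hsub hy)
      have h2 := mem_fball.1 hy'
      exact hr ((h2.trans' h1.symm').mono' (by omega) le_rfl)
    have hsub2 : fball H1 x (2 * r + 1) ∪ fball D u r ⊆ fball H x (2 * r + 1) := by
      apply Finset.union_subset (fball_mono le_rfl hH1le)
      intro y hy
      rw [mem_fball] at hy ⊢
      have h1 : FReach H r x v := (hx.mono' le_rfl hDle).symm'
      have h2 : FReach H 1 v u := FReach.adj' huv.symm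
      exact ((h1.trans' h2).trans' (hy.mono' le_rfl hDle)).mono' (by omega) le_rfl
    have hc1 := Finset.card_le_card hsub2
    rw [Finset.card_union_of_disjoint hdisj] at hc1
    have hc2 := Finset.card_le_card hsub
    set A := (fball H x (2 * r + 1)).card
    set B := (fball H1 x (2 * r + 1)).card
    have hBpos : (1 : ℝ) ≤ B := by exact_mod_cast fball_card_pos H1 x (2 * r + 1)
    have hBq : (B : ℝ) ≤ q * b := by
      refine le_trans ?_ hbq
      exact_mod_cast hc2
    have hAB : (B : ℝ) + b ≤ A := by
      have : B + (fball D v r).card ≤ A := by omega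
      rw [hb]
      exact_mod_cast this
    have hApos : (0 : ℝ) < A := by linarith
    rw [← Real.log_div (by positivity) (by positivity)]
    have h3 := Real.one_sub_inv_le_log_of_pos (x := (A : ℝ) / B) (by positivity)
    refine le_trans ?_ h3
    rw [inv_div, div_le_iff₀ (by linarith)]
    have h4 : (B : ℝ) / A ≤ q / (q + 1) := by
      rw [div_le_div_iff₀ hApos (by linarith)]
      nlinarith
    have h5 : (q / (q + 1)) * (q + 1) = q := by field_simp
    nlinarith
  have hmono : ∀ x, ∀ j, Real.log ((fball H1 x (2 * frad j + 1)).card) ≤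
      Real.log ((fball H x (2 * frad j + 1)).card) := by
    intro x j
    apply Real.log_le_log
    · exact lt_of_lt_of_le one_pos (fball_card_pos' _ _ _)
    · exact_mod_cast Finset.card_le_card (fball_mono le_rfl hH1le)
  have hgain : b / (q + 1) ≤ fPhi H N - fPhi H1 N := by
    unfold fPhi
    rw [← Finset.sum_sub_distrib]
    calc b / (q + 1) = ∑ x ∈ fball D v r, 1 / (q + 1) := by
          rw [Finset.sum_const, nsmul_eq_mul]; ring
      _ ≤ ∑ x ∈ fball D v r, (Real.log ((fball H x (2 * r + 1)).card) -
        Real.log ((fball H1 x (2 * r + 1)).card)) := Finset.sum_le_sum hterm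
      _ ≤ ∑ x : V, (Real.log ((fball H x (2 * r + 1)).card) -
        Real.log ((fball H1 x (2 * r + 1)).card)) := by
          apply Finset.sum_le_sum_of_subset_of_nonneg (Finset.subset_univ _)
          intro x _ _
          linarith [hmono x i]
      _ ≤ _ := by
          apply Finset.sum_le_sum
          intro x _
          rw [← Finset.sum_sub_distrib]
          exact Finset.single_le_sum (f := fun j => Real.log ((fball H x (2 * frad j + 1)).card) -
            Real.log ((fball H1 x (2 * frad j + 1)).card))
            (fun j _ => by linarith [hmono x j]) (Finset.mem_range.2 hi)
  refine ⟨H1, hH1le, ?_, ?_⟩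
  · intro h
    rw [h, sub_self] at hgain
    have : 0 < b / (q + 1) := by positivity
    linarith
  · have h1 : H.edgeSet ⊆ H1.edgeSet ∪ F' := by
      intro e he
      by_cases hm : e ∈ F'
      · exact Or.inr hm
      · left
        rw [hH1, edgeSet_deleteEdges]
        exact ⟨he, hm⟩
    have h2 : H.edgeSet.ncard ≤ H1.edgeSet.ncard + F'.ncard :=
      (Set.ncard_le_ncard h1 (Set.toFinite _)).trans (Set.ncard_union_le _ _)
    have h3 : (H.edgeSet.ncard : ℝ) ≤ H1.edgeSet.ncard + F'.ncard := by exact_mod_cast h2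
    have h4 : g * (q * b) ≤ g * (q * (q + 1)) * (fPhi H N - fPhi H1 N) := by
      rw [mul_assoc, mul_assoc]
      refine mul_le_mul_of_nonneg_left ?_ (by positivity)
      refine mul_le_mul_of_nonneg_left ?_ (by positivity)
      rw [div_le_iff₀ (by positivity)] at hgain
      linarith
    linarith

def FBad {V : Type} (H : SimpleGraph V) (g t : ℕ) : Prop :=
  ∀ H' ≤ H, H' ≠ ⊥ → ∃ u v, H'.Adj u v ∧ ∃ F : Set (Sym2 V), DegLE F g ∧
    ¬ FReach (H'.deleteEdges F) t u v

lemma bad_bound {V : Type} [Fintype V] (K g : ℕ) (hK : 0 < K) (q : ℝ) (hq : 1 ≤ q)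
    (hqn : (Fintype.card V : ℝ) ≤ q ^ K) (m : ℕ) :
    ∀ H : SimpleGraph V, H.edgeSet.ncard ≤ m → FBad H g (3 ^ (2 * K)) →
      (H.edgeSet.ncard : ℝ) ≤ g * (q * (q + 1)) * fPhi H (2 * K) := by
  have hnn : ∀ H : SimpleGraph V, 0 ≤ g * (q * (q + 1)) * fPhi H (2 * K) := by
    intro H
    apply mul_nonneg (by positivity)
    apply Finset.sum_nonneg; intro x _
    apply Finset.sum_nonneg; intro i _
    exact Real.log_natCast_nonneg _
  induction m with
  | zero =>
    intro H hm _
    have : H.edgeSet.ncard = 0 := by omega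
    rw [this]
    exact_mod_cast hnn H
  | succ m ih =>
    intro H hm hbad
    by_cases hH : H = ⊥
    · have : H.edgeSet.ncard = 0 := by rw [hH]; simp
      rw [this]
      exact_mod_cast hnn H
    obtain ⟨u, v, huv, F, hF, hr⟩ := hbad H le_rfl hH
    have hr' : ∀ i < 2 * K, ¬ FReach (H.deleteEdges F) (4 * frad i + 1) u v := by
      intro i hi h
      refine hr (h.mono' ?_ le_rfl)
      have h1 : 3 ^ (i + 1) ≤ 3 ^ (2 * K) := Nat.pow_le_pow_right (by norm_num) hi
      rw [pow_succ, ← frad_le] at h1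
      omega
    have hfr : ∀ i, frad i ≤ frad (i + 1) := fun i => by rw [frad]; omega
    have main : ∃ H1 ≤ H, H1 ≠ H ∧ (H.edgeSet.ncard : ℝ) ≤
      H1.edgeSet.ncard + g * (q * (q + 1)) * (fPhi H (2 * K) - fPhi H1 (2 * K)) := by
      obtain ⟨i, hi, h⟩ := select
        (fun i => ((fball (H.deleteEdges F) u (frad i)).card : ℝ))
        (fun i => ((fball (H.deleteEdges F) v (frad i)).card : ℝ)) (Fintype.card V) q K hK hq hqn
        (fun i => fball_card_mono (hfr i) le_rfl)
        (fun i => fball_card_mono (hfr i) le_rfl)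
        (fun i => fball_card_pos' _ _ _)
        (fun i => fball_card_pos' _ _ _)
        (fun i => by exact_mod_cast Finset.card_le_univ _)
        (fun i => by exact_mod_cast Finset.card_le_univ _)
      rcases h with ⟨h1, h2⟩ | ⟨h1, h2⟩
      · exact cut H (2 * K) g i hi q hq u v huv F hF (hr' i hi) (by exact_mod_cast h1) h2
      · exact cut H (2 * K) g i hi q hq v u huv.symm F hF (fun h => hr' i hi h.symm')
          (by exact_mod_cast h1) h2
    obtain ⟨H1, hle, hne, hbd⟩ := main
    have hlt : H1.edgeSet.ncard < H.edgeSet.ncard := by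
      apply Set.ncard_lt_ncard _ (Set.toFinite _)
      exact edgeSet_ssubset_edgeSet.2 (lt_of_le_of_ne hle hne)
    have := ih H1 (by omega) (fun H' h' => hbad H' (h'.trans hle))
    linarith

lemma phi_nonneg {V : Type} [Fintype V] (H : SimpleGraph V) (N : ℕ) : 0 ≤ fPhi H N := by
  apply Finset.sum_nonneg; intro x _
  apply Finset.sum_nonneg; intro i _
  exact Real.log_natCast_nonneg _

lemma phi_le {V : Type} [Fintype V] (H : SimpleGraph V) (N : ℕ) :
    fPhi H N ≤ Fintype.card V * (N * Real.log (Fintype.card V)) := by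
  unfold fPhi
  calc _ ≤ ∑ x : V, ∑ i ∈ Finset.range N, Real.log (Fintype.card V) := by
        apply Finset.sum_le_sum; intro x _
        apply Finset.sum_le_sum; intro i _
        apply Real.log_le_log
        · exact lt_of_lt_of_le one_pos (fball_card_pos' _ _ _)
        · exact_mod_cast Finset.card_le_univ _
    _ = _ := by simp

lemma greedy_s17 {V : Type} [Fintype V] (f t m : ℕ) (ht : 0 < t) :
    ∀ G : SimpleGraph V, G.edgeSet.ncard ≤ m →
    ∃ H ≤ G, FBad H (f + 1) t ∧ ∀ F : Set (Sym2 V), DegLE F f → ∀ u v,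
      (G.deleteEdges F).Adj u v → FReach (H.deleteEdges F) t u v := by
  classical
  induction m with
  | zero =>
    intro G hG
    have h0 : G.edgeSet = ∅ := by
      rw [← Set.ncard_eq_zero (Set.toFinite _)]; omega
    have hG' : G = ⊥ := by simpa using h0
    refine ⟨⊥, bot_le, ?_, ?_⟩
    · intro H' h h'
      exact absurd (le_bot_iff.1 h) h'
    · intro F _ u v h
      rw [hG'] at h
      simp at h
  | succ m ih =>
    intro G hG
    by_cases hG' : G = ⊥
    · refine ⟨⊥, bot_le, ?_, ?_⟩
      · intro H' h h'
        exact absurd (le_bot_iff.1 h) h'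
      · intro F _ u v h
        rw [hG'] at h
        simp at h
    obtain ⟨x, y, hxy⟩ : ∃ x y, G.Adj x y := by
      by_contra! h
      exact hG' (by ext a b; simp [h a b])
    have hlt : (G.deleteEdges {s(x, y)}).edgeSet.ncard < G.edgeSet.ncard := by
      apply Set.ncard_lt_ncard _ (Set.toFinite _)
      rw [edgeSet_deleteEdges]
      refine ⟨Set.sdiff_subset, fun h => ?_⟩
      have := h (show s(x, y) ∈ G.edgeSet from hxy)
      simp at this
    obtain ⟨H0, hle, hbad, hsp⟩ := ih (G.deleteEdges {s(x, y)}) (by omega)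
    have hle' : H0 ≤ G := hle.trans (deleteEdges_le _)
    by_cases hc : ∀ F : Set (Sym2 V), DegLE F f → FReach (H0.deleteEdges F) t x y
    · refine ⟨H0, hle', hbad, ?_⟩
      intro F hF u v huv
      rw [deleteEdges_adj] at huv
      by_cases he : s(u, v) = s(x, y)
      · rw [Sym2.eq_iff] at he
        rcases he with ⟨rfl, rfl⟩ | ⟨rfl, rfl⟩
        · exact hc F hF
        · exact (hc F hF).symm'
      · apply hsp F hF
        simp only [deleteEdges_adj]
        exact ⟨⟨huv.1, by simpa using he⟩, huv.2⟩
    · push Not at hc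
      obtain ⟨F0, hF0, hr0⟩ := hc
      refine ⟨H0 ⊔ fromEdgeSet {s(x, y)}, ?_, ?_, ?_⟩
      · apply sup_le hle'
        intro a b hab
        rw [fromEdgeSet_adj] at hab
        have h1 : s(a, b) = s(x, y) := hab.1
        rw [← mem_edgeSet, h1]
        exact hxy
      · intro H' hH' hne
        by_cases hm : H'.Adj x y
        · refine ⟨x, y, hm, insert s(x, y) F0, ?_, ?_⟩
          · intro w
            have : {e ∈ insert s(x, y) F0 | w ∈ e} ⊆ insert s(x, y) {e ∈ F0 | w ∈ e} := by
              rintro e ⟨he | he, hw⟩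
              · exact Or.inl he
              · exact Or.inr ⟨he, hw⟩
            calc _ ≤ _ := Set.ncard_le_ncard this (Set.toFinite _)
              _ ≤ _ := Set.ncard_insert_le _ _
              _ ≤ _ := Nat.succ_le_succ (hF0 w)
          · intro h
            refine hr0 (h.mono' le_rfl ?_)
            intro a b hab
            rw [deleteEdges_adj] at hab ⊢
            have h1 := hH' hab.1
            rw [sup_adj, fromEdgeSet_adj] at h1
            rcases h1 with h1 | h1
            · exact ⟨h1, fun h => hab.2 (Or.inr h)⟩
            · exact absurd (Or.inl h1.1) hab.2
        · apply hbad H' _ hne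
          intro a b hab
          have h1 := hH' hab
          rw [sup_adj, fromEdgeSet_adj] at h1
          rcases h1 with h1 | h1
          · exact h1
          · have h2 : s(a, b) = s(x, y) := h1.1
            rw [← mem_edgeSet, h2] at hab
            exact absurd hab hm
      · intro F hF u v huv
        rw [deleteEdges_adj] at huv
        by_cases he : s(u, v) = s(x, y)
        · refine (FReach.adj' ?_).mono' ht le_rfl
          rw [deleteEdges_adj, sup_adj, fromEdgeSet_adj]
          exact ⟨Or.inr ⟨he, huv.1.ne⟩, huv.2⟩
        · refine (hsp F hF u v ?_).mono' le_rfl (deleteEdges_mono le_sup_left)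
          simp only [deleteEdges_adj]
          exact ⟨⟨huv.1, by simpa using he⟩, huv.2⟩

lemma reach_mul {V : Type} {G H : SimpleGraph V} {t : ℕ}
    (h : ∀ u v, G.Adj u v → FReach H t u v) {u v : V} (p : G.Walk u v) :
    FReach H (t * p.length) u v := by
  induction p with
  | nil => exact FReach.refl'
  | cons h' p ih =>
    refine ((h _ _ h').trans' ih).mono' ?_ le_rfl
    rw [Walk.length_cons, mul_add]; omega

lemma spanner_of {V : Type} {G H : SimpleGraph V} {f t : ℕ} {T : ℝ} (hle : H ≤ G)
    (ht : 0 < t) (htT : (t : ℝ) ≤ T)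
    (h : ∀ F : Set (Sym2 V), DegLE F f → ∀ u v,
      (G.deleteEdges F).Adj u v → FReach (H.deleteEdges F) t u v) : IsFDSpanner G H f T := by
  refine ⟨hle, fun F _ hF u v => ?_⟩
  have hT : 0 < T := lt_of_lt_of_le (by exact_mod_cast ht) htT
  by_cases htop : (G.deleteEdges F).edist u v = ⊤
  · rw [htop]
    simp [ENNReal.mul_top, hT]
  · obtain ⟨p, hp⟩ := exists_walk_of_edist_ne_top htop
    obtain ⟨p', hp'⟩ := reach_mul (h F hF) p
    rw [← hp]
    have h1 : (H.deleteEdges F).edist u v ≤ ((t * p.length : ℕ) : ℕ∞) :=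
      (edist_le p').trans (by exact_mod_cast hp')
    calc ((H.deleteEdges F).edist u v : ℝ≥0∞) ≤ (((t * p.length : ℕ) : ℕ∞) : ℝ≥0∞) := by
          exact_mod_cast h1
      _ = (t : ℝ≥0∞) * ((p.length : ℕ∞) : ℝ≥0∞) := by push_cast; rfl
      _ ≤ _ := by
        gcongr
        rw [← ENNReal.ofReal_natCast]
        exact ENNReal.ofReal_le_ofReal htT

lemma edges_le {V : Type} [Fintype V] (G : SimpleGraph V) :
    (G.edgeSet.ncard : ℝ) ≤ Fintype.card V * (Fintype.card V - 1) / 2 := by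
  classical
  have h1 : G.edgeSet.ncard = G.edgeFinset.card := by
    rw [← coe_edgeFinset, Set.ncard_coe_finset]
  have h2 := G.card_edgeFinset_le_card_choose_two
  rw [h1, ← Nat.cast_choose_two]
  exact_mod_cast h2

lemma core {V : Type} [Fintype V] (f k : ℕ) (hf : 0 < f) (hk : 0 < k)
    (hn : 0 < Fintype.card V) (T : ℝ) (hT : (81 : ℝ) ^ k ≤ T) (G : SimpleGraph V) :
    ∃ H, IsFDSpanner G H f T ∧ (H.edgeSet.ncard : ℝ) ≤
      16 * f * k * Real.log (Fintype.card V) * (Fintype.card V : ℝ) ^ (1 + 1 / (k : ℝ)) := by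
  obtain ⟨H, hle, hbad, hsp⟩ := greedy_s17 f (3 ^ (2 * (2 * k))) _ (by positivity) G le_rfl
  refine ⟨H, spanner_of hle (by positivity) ?_ hsp, ?_⟩
  · refine le_trans ?_ hT
    rw [show 2 * (2 * k) = 4 * k by ring, pow_mul]
    norm_num
  set n : ℝ := (Fintype.card V : ℝ) with hndef
  have hn1 : 1 ≤ n := by rw [hndef]; exact_mod_cast hn
  have hk' : (0 : ℝ) < k := by exact_mod_cast hk
  set q : ℝ := n ^ (1 / (2 * k : ℝ)) with hqdef
  have hq : 1 ≤ q := Real.one_le_rpow hn1 (by positivity)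
  have hqk : q ^ (2 * k) = n := by
    rw [hqdef, ← Real.rpow_natCast, ← Real.rpow_mul (by linarith)]
    push_cast
    rw [one_div, inv_mul_cancel₀ (by positivity), Real.rpow_one]
  have hq2 : q ^ 2 = n ^ (1 / (k : ℝ)) := by
    rw [hqdef, ← Real.rpow_natCast, ← Real.rpow_mul (by linarith)]
    congr 1
    push_cast
    field_simp
  have h1 := bad_bound (2 * k) (f + 1) (by omega) q hq hqk.ge _ H le_rfl hbad
  have h2 := phi_le H (2 * (2 * k))
  rw [← hndef] at h2
  have hL : 0 ≤ Real.log n := Real.log_nonneg hn1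
  have hf1 : (1 : ℝ) ≤ f := by exact_mod_cast hf
  calc (H.edgeSet.ncard : ℝ) ≤ _ := h1
    _ ≤ (2 * f) * (q * (q + q)) * (n * ((2 * (2 * k) : ℕ) * Real.log n)) := by
      refine mul_le_mul ?_ h2 (phi_nonneg H _) (by positivity)
      gcongr
      push_cast
      linarith
    _ = 16 * f * k * Real.log n * (n * q ^ 2) := by push_cast; ring
    _ = _ := by rw [hq2, Real.rpow_add (by linarith), Real.rpow_one]

/-- There is an absolute constant `c > 0` such that every `n`-vertex
unweighted graph admits an `f`-FD `k^{c·k}`-spanner with at most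
`c·f·n^{1+1/k}·(log n)^c` edges. -/
theorem fd_expander_spanner_exists :
    ∃ c : ℝ, 0 < c ∧
      ∀ (f n k : ℕ), 0 < f → 0 < n → 0 < k →
        ∀ (V : Type) [Fintype V], Fintype.card V = n →
          ∀ G : SimpleGraph V,
            ∃ H : SimpleGraph V,
              IsFDSpanner G H f ((k : ℝ) ^ (c * k)) ∧
              (H.edgeSet.ncard : ℝ) ≤
                c * f * (n : ℝ) ^ (1 + 1 / (k : ℝ)) * Real.log n ^ c := by
  refine ⟨7, by norm_num, ?_⟩
  intro f n k hf hn hk V _ hV G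
  have hlog7 : Real.log n ^ (7 : ℝ) = Real.log n ^ 7 := by
    exact_mod_cast Real.rpow_natCast (Real.log n) 7
  have hk7 : (k : ℝ) ^ ((7 : ℝ) * k) = ((k : ℝ) ^ 7) ^ k := by
    rw [← pow_mul, ← Real.rpow_natCast]; push_cast; rfl
  rw [hlog7, hk7]
  have hn1 : (1 : ℝ) ≤ n := by exact_mod_cast hn
  have hf1 : (1 : ℝ) ≤ f := by exact_mod_cast hf
  have hk1 : (1 : ℝ) ≤ k := by exact_mod_cast hk
  have hL0 : 0 ≤ Real.log n := Real.log_nonneg hn1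
  have hpow : (n : ℝ) ≤ (n : ℝ) ^ (1 + 1 / (k : ℝ)) := by
    conv_lhs => rw [← Real.rpow_one (n : ℝ)]
    apply Real.rpow_le_rpow_of_exponent_le hn1
    have : 0 ≤ 1 / (k : ℝ) := by positivity
    linarith
  have hedge := edges_le G
  rw [hV] at hedge
  have htriv : (G.edgeSet.ncard : ℝ) ≤ 7 * f * (n : ℝ) ^ (1 + 1 / (k : ℝ)) * Real.log n ^ 7 →
      ∃ H : SimpleGraph V, IsFDSpanner G H f (((k : ℝ) ^ 7) ^ k) ∧
        (H.edgeSet.ncard : ℝ) ≤ 7 * f * (n : ℝ) ^ (1 + 1 / (k : ℝ)) * Real.log n ^ 7 := by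
    intro h
    refine ⟨G, spanner_of (t := 1) le_rfl one_pos ?_ (fun F _ u v h => FReach.adj' h), h⟩
    push_cast
    exact one_le_pow₀ (one_le_pow₀ hk1)
  have hfn : 7 * (n : ℝ) * Real.log n ^ 7 ≤
      7 * f * (n : ℝ) ^ (1 + 1 / (k : ℝ)) * Real.log n ^ 7 := by
    have : 7 * (n : ℝ) ≤ 7 * f * (n : ℝ) ^ (1 + 1 / (k : ℝ)) := by nlinarith
    exact mul_le_mul_of_nonneg_right this (by positivity)
  by_cases hn3 : n < 3
  · apply htriv
    refine le_trans ?_ hfn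
    refine hedge.trans ?_
    have : n = 1 ∨ n = 2 := by omega
    rcases this with rfl | rfl
    · simp
    · have h1 := Real.log_two_gt_d9
      have h2 : (0.693 : ℝ) ^ 7 ≤ Real.log 2 ^ 7 := by
        apply pow_le_pow_left₀ (by norm_num); linarith
      norm_num at h2 ⊢
      linarith
  have hL1 : 1 ≤ Real.log n := by
    rw [Real.le_log_iff_exp_le (by linarith)]
    have h3 : (3 : ℝ) ≤ n := by exact_mod_cast (not_lt.1 hn3)
    linarith [Real.exp_one_lt_d9]
  have hL7 : 1 ≤ Real.log n ^ 7 := one_le_pow₀ hL1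
  by_cases hn15 : n ≤ 15
  · apply htriv
    refine le_trans ?_ hfn
    refine hedge.trans ?_
    have : (n : ℝ) ≤ 15 := by exact_mod_cast hn15
    nlinarith
  by_cases hkone : k = 1
  · subst hkone
    apply htriv
    refine hedge.trans ?_
    have e1 : (n : ℝ) ^ (1 + 1 / ((1 : ℕ) : ℝ)) = n * n := by
      rw [show (1 + 1 / ((1 : ℕ) : ℝ)) = ((2 : ℕ) : ℝ) by norm_num, Real.rpow_natCast]; ring
    rw [e1]
    calc (n : ℝ) * (n - 1) / 2 ≤ 7 * 1 * (n * n) * 1 := by nlinarith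
      _ ≤ _ := by gcongr
  have hL2 : 2 ≤ Real.log n := by
    rw [Real.le_log_iff_exp_le (by linarith)]
    have h3 : (16 : ℝ) ≤ n := by exact_mod_cast (not_le.1 hn15)
    have h4 : Real.exp 2 = Real.exp 1 * Real.exp 1 := by rw [← Real.exp_add]; norm_num
    rw [h4]
    nlinarith [Real.exp_one_lt_d9, Real.exp_pos 1]
  have hL5 : (2 : ℝ) ^ 5 ≤ Real.log n ^ 5 := pow_le_pow_left₀ (by norm_num) hL2 5
  have hLL : 224 * Real.log n ^ 2 ≤ 7 * Real.log n ^ 7 := by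
    have : Real.log n ^ 7 = Real.log n ^ 5 * Real.log n ^ 2 := by ring
    rw [this]
    nlinarith [sq_nonneg (Real.log n)]
  have h81 : (81 : ℝ) ^ k ≤ ((k : ℝ) ^ 7) ^ k := by
    apply pow_le_pow_left₀ (by norm_num)
    have : (2 : ℝ) ≤ k := by
      have : 2 ≤ k := by omega
      exact_mod_cast this
    have := pow_le_pow_left₀ (by norm_num) this 7
    linarith
  set L := Real.log n with hL
  by_cases hkL : (k : ℝ) ≤ L
  · obtain ⟨H, h1, h2⟩ := core f k hf hk (by omega) _ h81 G
    refine ⟨H, h1, h2.trans ?_⟩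
    rw [hV, ← hL]
    have h3 : 16 * (k * L) ≤ 7 * L ^ 7 := by nlinarith
    calc _ = (16 * (k * L)) * (f * (n : ℝ) ^ (1 + 1 / (k : ℝ))) := by ring
      _ ≤ (7 * L ^ 7) * (f * (n : ℝ) ^ (1 + 1 / (k : ℝ))) := by gcongr
      _ = _ := by ring
  · push Not at hkL
    set k' := ⌈L⌉₊ with hk'
    have hk'k : k' ≤ k := Nat.ceil_le.2 hkL.le
    have hk'L : L ≤ k' := Nat.le_ceil L
    have hk'1 : (k' : ℝ) < L + 1 := Nat.ceil_lt_add_one hL0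
    have hk'0 : 0 < k' := by
      have : (0 : ℝ) < k' := by linarith
      exact_mod_cast this
    have h81' : (81 : ℝ) ^ k' ≤ ((k : ℝ) ^ 7) ^ k :=
      (pow_le_pow_right₀ (by norm_num) hk'k).trans h81
    obtain ⟨H, h1, h2⟩ := core f k' hf hk'0 (by omega) _ h81' G
    refine ⟨H, h1, h2.trans ?_⟩
    rw [hV, ← hL]
    have he : (n : ℝ) ^ (1 + 1 / (k' : ℝ)) ≤ n * 3 := by
      rw [Real.rpow_add (by linarith), Real.rpow_one]
      gcongr
      rw [Real.rpow_def_of_pos (by linarith), ← hL]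
      calc Real.exp (L * (1 / k')) ≤ Real.exp 1 := by
            apply Real.exp_le_exp.2
            rw [mul_one_div, div_le_one (by linarith)]
            exact hk'L
        _ ≤ 3 := by linarith [Real.exp_one_lt_d9]
    have h3 : 48 * (k' * L) ≤ 7 * L ^ 7 := by nlinarith
    calc _ ≤ 16 * f * k' * L * (n * 3) := by gcongr
      _ = (48 * (k' * L)) * (f * n) := by ring
      _ ≤ (7 * L ^ 7) * (f * (n : ℝ) ^ (1 + 1 / (k : ℝ))) := by gcongr
      _ = _ := by ring
end
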